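/- arXiv:2406.08954 — 2 statements merged into one kernel-verified Lean document; each statement's English description precedes it below -/
import Mathlib

section
/- Let g : ℝᵈ → ℝ be 1-periodic in each coordinate and Lipschitz continuous with Lipschitz constant L. Then there exists a constant C > 0 depending only on d such that for every integer s ≥ 2 there is a real trigonometric polynomial g_s of degree ≤ s with g_s(ω) ≤ g(ω) for all ω ∈ ℝᵈ and ∫_{[0,1]^d} |g(ω) − g_s(ω)| dω ≤ C·L·(1 + ln s)/s. -/
open MeasureTheory

/-- `trigChar k z = exp(2πi⟨k, z⟩)`, the complex exponential with frequency `k ∈ ℤᵐ`. -/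
noncomputable def trigChar {m : ℕ} (k : Fin m → ℤ) (z : Fin m → ℝ) : ℂ :=
  Complex.exp (2 * (Real.pi : ℂ) * Complex.I * ∑ i, (k i : ℂ) * (z i : ℂ))

/-- `t : ℝᵐ → ℝ` is a real trigonometric polynomial of degree `≤ s`: a finite combination
`t(z) = Σ_{k ∈ ℤᵐ, ‖k‖_∞ ≤ s} c_k exp(2πi⟨k, z⟩)` that is real-valued (hence 1-periodic in
each coordinate). -/
def IsTrigPoly {m : ℕ} (s : ℕ) (t : (Fin m → ℝ) → ℝ) : Prop :=
  ∃ (S : Finset (Fin m → ℤ)) (c : (Fin m → ℤ) → ℂ),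
    (∀ k ∈ S, ∀ i, |k i| ≤ (s : ℤ)) ∧
    ∀ z, (t z : ℂ) = ∑ k ∈ S, c k * trigChar k z

/-!
The translates of the Fejér–Korovkin kernel of degree `s` by the multiples of `1 / (s + 2)` form a
nonnegative partition of unity on the circle, because its frequencies lie in `[-s, s]`, where the
only multiple of `s + 2` is `0`. The same holds after multiplication by a character of frequency
`1`, so the second moment of the weights is governed by the first Fourier coefficient
`cos (π / (s + 2))` of the kernel, and by Jensen's inequality their first absolute moment is at most
`1 / (s + 2)`. Averaging grid samples against a tensor power of the kernel therefore approximates an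
`L`-Lipschitz function on the `d`-dimensional torus within `L d / (s + 2)` uniformly, without a
logarithm. Lowering the function by this error before approximating it makes the approximation
one-sided.
-/

section Circle

lemma fourier_toAddCircle {N : ℕ} [NeZero N] (m : ℤ) (j : ZMod N) :
    fourier m (ZMod.toAddCircle j) = ZMod.stdAddChar (j * (m : ZMod N)) := by
  rw [fourier_apply, ← map_zsmul, zsmul_eq_mul, mul_comm, ZMod.stdAddChar_apply]
  rfl

lemma fourier_sub {T : ℝ} (m : ℤ) (x y : AddCircle T) :
    fourier m (x - y) = fourier m x * fourier (-m) y := by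
  rw [fourier_apply, smul_sub, sub_eq_add_neg, ← neg_smul, AddCircle.toCircle_add, Circle.coe_mul,
    fourier_apply, fourier_apply]

lemma sum_fourier_sub_toAddCircle {N : ℕ} [NeZero N] (m : ℤ) (u : UnitAddCircle) :
    ∑ j : ZMod N, fourier m (u - ZMod.toAddCircle j) =
      if (N : ℤ) ∣ m then N * fourier m u else 0 := by
  simp_rw [fourier_sub, fourier_toAddCircle]
  rw [← Finset.mul_sum, AddChar.sum_mulShift _ (ZMod.isPrimitive_stdAddChar N), ZMod.card]
  simp only [ZMod.intCast_zmod_eq_zero_iff_dvd, dvd_neg]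
  split_ifs <;> simp [mul_comm]

lemma fourier_mul_norm_sum_sq {T : ℝ} (n : ℕ) (a : ℕ → ℝ) (r : ℤ) (u : AddCircle T) :
    fourier r u * (‖∑ k ∈ Finset.range n, (a k : ℂ) * fourier (k : ℤ) u‖ ^ 2 : ℝ) =
      ∑ k ∈ Finset.range n, ∑ l ∈ Finset.range n,
        (a k * a l : ℝ) * fourier ((k : ℤ) - l + r) u := by
  rw [Complex.ofReal_pow, ← Complex.mul_conj', map_sum, Finset.sum_mul_sum, Finset.mul_sum]
  refine Finset.sum_congr rfl fun k _ => ?_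
  rw [Finset.mul_sum]
  refine Finset.sum_congr rfl fun l _ => ?_
  rw [map_mul, Complex.conj_ofReal, ← fourier_neg, sub_eq_add_neg, fourier_add, fourier_add]
  push_cast
  ring

lemma sum_sum_ite_eq_add {M : Type*} [AddCommMonoid M] (n r : ℕ) (f : ℕ → ℕ → M) :
    ∑ k ∈ Finset.range n, ∑ l ∈ Finset.range n, (if l = k + r then f k l else 0) =
      ∑ k ∈ Finset.range (n - r), f k (k + r) := by
  simp_rw [Finset.sum_ite_eq', ← Finset.sum_filter]
  exact Finset.sum_congr (by grind) fun _ _ => rfl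

/-- No aliasing occurs: a frequency `k - l + r` with `k, l < n` has absolute value less than `N`. -/
lemma sum_fourier_mul_norm_sum_sq {N n r : ℕ} [NeZero N] (hN : n + r ≤ N) (a : ℕ → ℝ)
    (u : UnitAddCircle) :
    ∑ j : ZMod N, fourier (r : ℤ) (u - ZMod.toAddCircle j) *
        (‖∑ k ∈ Finset.range n, (a k : ℂ) * fourier (k : ℤ) (u - ZMod.toAddCircle j)‖ ^ 2 : ℝ) =
      (N * ∑ k ∈ Finset.range (n - r), a k * a (k + r) : ℝ) := by
  have sample {k l : ℕ} (hk : k ∈ Finset.range n) (hl : l ∈ Finset.range n) :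
      ∑ j : ZMod N, fourier ((k : ℤ) - l + r) (u - ZMod.toAddCircle j) =
        if l = k + r then (N : ℂ) else 0 := by
    rw [Finset.mem_range] at hk hl
    have hdvd : (N : ℤ) ∣ (k : ℤ) - l + r ↔ l = k + r := by
      refine ⟨fun h => ?_, fun h => ⟨0, by omega⟩⟩
      have := Int.eq_zero_of_abs_lt_dvd h (abs_lt.mpr ⟨by omega, by omega⟩)
      omega
    rw [sum_fourier_sub_toAddCircle]
    simp only [hdvd]
    split_ifs with h
    · rw [h, Nat.cast_add, sub_add_cancel_left, neg_add_cancel, fourier_zero, mul_one]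
    · rfl
  calc _ = ∑ k ∈ Finset.range n, ∑ l ∈ Finset.range n, (a k * a l : ℝ) *
        ∑ j : ZMod N, fourier ((k : ℤ) - l + r) (u - ZMod.toAddCircle j) := by
        simp_rw [fourier_mul_norm_sum_sq, Finset.mul_sum]
        rw [Finset.sum_comm]
        exact Finset.sum_congr rfl fun k _ => Finset.sum_comm
    _ = ∑ k ∈ Finset.range n, ∑ l ∈ Finset.range n,
        if l = k + r then (N * (a k * a l) : ℂ) else 0 := by
        refine Finset.sum_congr rfl fun k hk => Finset.sum_congr rfl fun l hl => ?_
        rw [sample hk hl, mul_ite, mul_zero, Complex.ofReal_mul, mul_comm]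
    _ = _ := by
        rw [sum_sum_ite_eq_add n r fun k l => (N * (a k * a l) : ℂ), ← Finset.mul_sum]
        push_cast
        rfl

lemma re_fourier_one_coe (x : ℝ) :
    (fourier 1 (x : UnitAddCircle)).re = Real.cos (2 * Real.pi * x) := by
  rw [fourier_one, AddCircle.toCircle_apply_mk, div_one, Circle.coe_exp,
    Complex.exp_ofReal_mul_I_re]

lemma eight_mul_norm_sq_le_one_sub_re_fourier (u : UnitAddCircle) :
    8 * ‖u‖ ^ 2 ≤ 1 - (fourier 1 u).re := by
  obtain ⟨x, rfl⟩ := QuotientAddGroup.mk_surjective u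
  set y := x - round x with hy
  have hcos : (fourier 1 (x : UnitAddCircle)).re = Real.cos (2 * Real.pi * y) := by
    rw [re_fourier_one_coe, hy, mul_sub, mul_comm _ (round x : ℝ), Real.cos_sub_int_mul_two_pi]
  have hpi : |2 * Real.pi * y| ≤ Real.pi := by
    rw [abs_mul, abs_of_pos Real.two_pi_pos]
    nlinarith [Real.pi_pos, abs_sub_round x]
  have hscale : 2 / Real.pi ^ 2 * (2 * Real.pi * y) ^ 2 = 8 * y ^ 2 := by
    field_simp
    ring
  have hle := Real.cos_le_one_sub_mul_cos_sq hpi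
  rw [UnitAddCircle.norm_eq, sq_abs, hcos]
  linarith

end Circle

section Kernel

lemma cos_mul_sum_sin_sq (θ : ℝ) (n : ℕ) :
    Real.cos θ * ∑ k ∈ Finset.range (n + 1), Real.sin ((k + 1) * θ) ^ 2 =
      ∑ k ∈ Finset.range n, Real.sin ((k + 1) * θ) * Real.sin ((k + 2) * θ) +
        Real.sin ((n + 1) * θ) * Real.sin ((n + 2) * θ) / 2 := by
  induction n with
  | zero =>
    simp only [zero_add, Finset.sum_range_one, Finset.range_zero, Finset.sum_empty,
      Nat.cast_zero, one_mul, Real.sin_two_mul]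
    ring
  | succ n ih =>
    have hrec : Real.sin ((n + 1) * θ) + Real.sin ((n + 3) * θ) =
        2 * Real.cos θ * Real.sin ((n + 2) * θ) := by
      rw [show (n + 1) * θ = (n + 2) * θ - θ by ring, show (n + 3) * θ = (n + 2) * θ + θ by ring,
        Real.sin_sub, Real.sin_add]
      ring
    rw [Finset.sum_range_succ, mul_add, ih, Finset.sum_range_succ _ n]
    push_cast
    rw [show (n + 1 + 1 : ℝ) = n + 2 by ring, show (n + 1 + 2 : ℝ) = n + 3 by ring]
    linear_combination -Real.sin ((n + 2) * θ) / 2 * hrec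

/-- The coefficients `sin ((k + 1) π / (s + 2))`, `0 ≤ k ≤ s`, of the Fejér–Korovkin polynomial of
degree `s`. They form the Perron eigenvector of the path with `s + 1` vertices, for the eigenvalue
`2 cos (π / (s + 2))`, which makes them optimal for concentrating the kernel at the origin. -/
noncomputable def korovkinCoeff (s k : ℕ) : ℝ :=
  Real.sin ((k + 1) * (Real.pi / (s + 2)))

lemma sum_korovkinCoeff_sq_pos (s : ℕ) :
    0 < ∑ k ∈ Finset.range (s + 1), korovkinCoeff s k ^ 2 := by
  refine Finset.sum_pos' (fun _ _ => sq_nonneg _) ⟨0, Finset.mem_range.mpr s.succ_pos, ?_⟩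
  refine pow_pos (Real.sin_pos_of_pos_of_lt_pi (by positivity) ?_) 2
  rw [Nat.cast_zero, zero_add, one_mul]
  exact div_lt_self Real.pi_pos (by linarith [(Nat.cast_nonneg s : (0 : ℝ) ≤ s)])

lemma sum_korovkinCoeff_mul_succ (s : ℕ) :
    ∑ k ∈ Finset.range s, korovkinCoeff s k * korovkinCoeff s (k + 1) =
      Real.cos (Real.pi / (s + 2)) * ∑ k ∈ Finset.range (s + 1), korovkinCoeff s k ^ 2 := by
  have hsin : Real.sin ((s + 2) * (Real.pi / (s + 2))) = 0 := by
    rw [mul_div_cancel₀ _ (by positivity), Real.sin_pi]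
  simp only [korovkinCoeff, cos_mul_sum_sin_sq, hsin, mul_zero, zero_div, add_zero]
  refine Finset.sum_congr rfl fun k _ => ?_
  push_cast
  ring_nf

/-- The Fejér–Korovkin kernel of degree `s` on `ℝ / ℤ`, normalised so that its translates by the
multiples of `1 / (s + 2)` sum to `1`. -/
noncomputable def fejerKorovkinKernel (s : ℕ) (u : UnitAddCircle) : ℝ :=
  ‖∑ k ∈ Finset.range (s + 1), (korovkinCoeff s k : ℂ) * fourier (k : ℤ) u‖ ^ 2 /
    ((s + 2) * ∑ k ∈ Finset.range (s + 1), korovkinCoeff s k ^ 2)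

lemma fejerKorovkinKernel_nonneg (s : ℕ) (u : UnitAddCircle) : 0 ≤ fejerKorovkinKernel s u := by
  have := sum_korovkinCoeff_sq_pos s
  unfold fejerKorovkinKernel
  positivity

lemma exists_fejerKorovkinKernel_eq_sum_fourier (s : ℕ) :
    ∃ c : ℤ → ℂ, ∀ u, (fejerKorovkinKernel s u : ℂ) =
      ∑ m ∈ Finset.Icc (-(s : ℤ)) s, c m * fourier m u := by
  let I := Finset.range (s + 1) ×ˢ Finset.range (s + 1)
  let M : ℝ := (s + 2) * ∑ k ∈ Finset.range (s + 1), korovkinCoeff s k ^ 2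
  have hI : ∀ p ∈ I, (p.1 : ℤ) - p.2 ∈ Finset.Icc (-(s : ℤ)) s := by
    intro p hp
    simp only [I, Finset.mem_product, Finset.mem_range] at hp
    rw [Finset.mem_Icc]
    omega
  refine ⟨fun m => ∑ p ∈ I with (p.1 : ℤ) - p.2 = m,
    ((korovkinCoeff s p.1 * korovkinCoeff s p.2 : ℝ) : ℂ) / M, fun u => ?_⟩
  have hsq := fourier_mul_norm_sum_sq (s + 1) (korovkinCoeff s) 0 u
  simp only [fourier_zero, one_mul, add_zero] at hsq
  rw [fejerKorovkinKernel, Complex.ofReal_div, hsq, ← Finset.sum_product',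
    ← Finset.sum_fiberwise_of_maps_to hI, Finset.sum_div]
  refine Finset.sum_congr rfl fun m _ => ?_
  rw [Finset.sum_div, Finset.sum_mul]
  refine Finset.sum_congr rfl fun p hp => ?_
  rw [(Finset.mem_filter.mp hp).2]
  ring

lemma sum_fourier_mul_fejerKorovkinKernel (s : ℕ) {r : ℕ} (hr : r ≤ 1) (u : UnitAddCircle) :
    ∑ j : ZMod (s + 2), fourier (r : ℤ) (u - ZMod.toAddCircle j) *
        (fejerKorovkinKernel s (u - ZMod.toAddCircle j) : ℂ) =
      ((∑ k ∈ Finset.range (s + 1 - r), korovkinCoeff s k * korovkinCoeff s (k + r)) /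
        ∑ k ∈ Finset.range (s + 1), korovkinCoeff s k ^ 2 : ℝ) := by
  simp_rw [fejerKorovkinKernel, Complex.ofReal_div, ← mul_div_assoc]
  rw [← Finset.sum_div, sum_fourier_mul_norm_sum_sq (by omega), ← Complex.ofReal_div]
  push_cast
  rw [mul_div_mul_left _ _ (by norm_cast)]

lemma sum_fejerKorovkinKernel_sub (s : ℕ) (u : UnitAddCircle) :
    ∑ j : ZMod (s + 2), fejerKorovkinKernel s (u - ZMod.toAddCircle j) = 1 := by
  have h := sum_fourier_mul_fejerKorovkinKernel s zero_le_one u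
  simp only [Nat.cast_zero, fourier_zero, one_mul, tsub_zero, add_zero, ← sq,
    div_self (sum_korovkinCoeff_sq_pos s).ne'] at h
  exact_mod_cast h

lemma sum_re_fourier_one_mul_fejerKorovkinKernel (s : ℕ) (u : UnitAddCircle) :
    ∑ j : ZMod (s + 2), (fourier 1 (u - ZMod.toAddCircle j)).re *
      fejerKorovkinKernel s (u - ZMod.toAddCircle j) = Real.cos (Real.pi / (s + 2)) := by
  have h := congrArg Complex.re (sum_fourier_mul_fejerKorovkinKernel s le_rfl u)
  simpa only [Nat.cast_one, Nat.add_sub_cancel, sum_korovkinCoeff_mul_succ, Complex.re_sum,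
    Complex.re_mul_ofReal, Complex.ofReal_re,
    mul_div_cancel_right₀ _ (sum_korovkinCoeff_sq_pos s).ne'] using h

lemma sum_fejerKorovkinKernel_mul_norm_sq_le (s : ℕ) (u : UnitAddCircle) :
    ∑ j : ZMod (s + 2), fejerKorovkinKernel s (u - ZMod.toAddCircle j) *
      ‖u - ZMod.toAddCircle j‖ ^ 2 ≤ (1 - Real.cos (Real.pi / (s + 2))) / 8 := by
  rw [le_div_iff₀' (by norm_num), Finset.mul_sum]
  calc _ ≤ ∑ j : ZMod (s + 2), (fejerKorovkinKernel s (u - ZMod.toAddCircle j) -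
        (fourier 1 (u - ZMod.toAddCircle j)).re *
          fejerKorovkinKernel s (u - ZMod.toAddCircle j)) := by
        refine Finset.sum_le_sum fun j _ => ?_
        linarith [mul_le_mul_of_nonneg_left
          (eight_mul_norm_sq_le_one_sub_re_fourier (u - ZMod.toAddCircle j))
          (fejerKorovkinKernel_nonneg s (u - ZMod.toAddCircle j))]
    _ = 1 - Real.cos (Real.pi / (s + 2)) := by
        rw [Finset.sum_sub_distrib, sum_fejerKorovkinKernel_sub,
          sum_re_fourier_one_mul_fejerKorovkinKernel]

lemma sum_fejerKorovkinKernel_mul_norm_le (s : ℕ) (u : UnitAddCircle) :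
    ∑ j : ZMod (s + 2), fejerKorovkinKernel s (u - ZMod.toAddCircle j) *
      ‖u - ZMod.toAddCircle j‖ ≤ 1 / (s + 2) := by
  refine le_of_sq_le_sq ?_ (by positivity)
  calc _ ≤ ∑ j : ZMod (s + 2), fejerKorovkinKernel s (u - ZMod.toAddCircle j) *
        ‖u - ZMod.toAddCircle j‖ ^ 2 :=
      Real.pow_arith_mean_le_arith_mean_pow _ _ _ (fun _ _ => fejerKorovkinKernel_nonneg s _)
        (sum_fejerKorovkinKernel_sub s u) (fun _ _ => norm_nonneg _) 2
    _ ≤ (1 - Real.cos (Real.pi / (s + 2))) / 8 := sum_fejerKorovkinKernel_mul_norm_sq_le s u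
    _ ≤ (Real.pi / (s + 2)) ^ 2 / 2 / 8 := by
      linarith [Real.one_sub_sq_div_two_le_cos (x := Real.pi / (s + 2))]
    _ = (Real.pi / 4) ^ 2 * (1 / (s + 2)) ^ 2 := by ring
    _ ≤ (1 / (s + 2)) ^ 2 := by
      refine mul_le_of_le_one_left (sq_nonneg _) (pow_le_one₀ (by positivity) ?_)
      linarith [Real.pi_le_four]

end Kernel

section Operator

variable {ι E : Type*} [Fintype ι] [DecidableEq ι] [NormedAddCommGroup E] [NormedSpace ℝ E]

lemma norm_sum_smul_sub_le {α : Type*} {I : Finset α} {w : α → ℝ} (hw : ∀ j ∈ I, 0 ≤ w j)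
    (hw_sum : ∑ j ∈ I, w j = 1) (f : α → E) (y : E) :
    ‖∑ j ∈ I, w j • f j - y‖ ≤ ∑ j ∈ I, w j * ‖f j - y‖ := by
  have hdiff : ∑ j ∈ I, w j • f j - y = ∑ j ∈ I, w j • (f j - y) := by
    simp only [smul_sub, Finset.sum_sub_distrib, ← Finset.sum_smul, hw_sum, one_smul]
  rw [hdiff]
  refine (norm_sum_le _ _).trans_eq (Finset.sum_congr rfl fun j hj => ?_)
  rw [norm_smul, Real.norm_of_nonneg (hw j hj)]

lemma sum_prod_mul_apply_eq {R κ : Type*} [CommSemiring R] [Fintype κ] (w : ι → κ → R) {l : ι}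
    (hw : ∀ i ≠ l, ∑ a, w i a = 1) (f : κ → R) :
    ∑ j : ι → κ, (∏ i, w i (j i)) * f (j l) = ∑ a, w l a * f a := by
  have absorb (j : ι → κ) : (∏ i, w i (j i)) * f (j l) =
      ∏ i, w i (j i) * (if i = l then f (j i) else 1) := by
    rw [Finset.prod_mul_distrib, Fintype.prod_ite_eq']
  simp_rw [absorb]
  rw [← Fintype.prod_sum fun i a => w i a * (if i = l then f a else 1),
    Fintype.prod_eq_single l fun i hi => by simp only [if_neg hi, mul_one, hw i hi]]
  simp only [if_true]

/-- The Fejér–Korovkin operator of degree `s`: a discrete convolution of the samples of `G` on the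
grid `(ℤ / (s + 2)) ^ ι` with a tensor power of the Fejér–Korovkin kernel. -/
noncomputable def fejerKorovkinOperator (s : ℕ) (G : UnitAddTorus ι → E) (x : UnitAddTorus ι) : E :=
  ∑ j : ι → ZMod (s + 2), (∏ i, fejerKorovkinKernel s (x i - ZMod.toAddCircle (j i))) •
    G fun i => ZMod.toAddCircle (j i)

lemma norm_fejerKorovkinOperator_sub_le {G : UnitAddTorus ι → E} {L : NNReal}
    (hG : LipschitzWith L G) (s : ℕ) (x : UnitAddTorus ι) :
    ‖fejerKorovkinOperator s G x - G x‖ ≤ L * (Fintype.card ι / (s + 2)) := by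
  set w : (ι → ZMod (s + 2)) → ℝ :=
    fun j => ∏ i, fejerKorovkinKernel s (x i - ZMod.toAddCircle (j i))
  have hw (j) : 0 ≤ w j := Finset.prod_nonneg fun _ _ => fejerKorovkinKernel_nonneg s _
  have hw_sum : ∑ j, w j = 1 := by
    rw [← Fintype.prod_sum fun i j => fejerKorovkinKernel s (x i - ZMod.toAddCircle j)]
    exact Finset.prod_eq_one fun i _ => sum_fejerKorovkinKernel_sub s (x i)
  have hLip (j : ι → ZMod (s + 2)) : ‖(G fun i => ZMod.toAddCircle (j i)) - G x‖ ≤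
      L * ∑ i, ‖x i - ZMod.toAddCircle (j i)‖ := by
    refine (hG.norm_sub_le _ _).trans ?_
    gcongr
    rw [pi_norm_le_iff_of_nonneg (by positivity)]
    intro i
    rw [Pi.sub_apply, norm_sub_rev]
    exact Finset.single_le_sum (f := fun i => ‖x i - ZMod.toAddCircle (j i)‖)
      (fun _ _ => norm_nonneg _) (Finset.mem_univ i)
  calc _ ≤ ∑ j, w j * ‖(G fun i => ZMod.toAddCircle (j i)) - G x‖ :=
      norm_sum_smul_sub_le (fun j _ => hw j) hw_sum _ _
    _ ≤ ∑ j, w j * (L * ∑ i, ‖x i - ZMod.toAddCircle (j i)‖) := by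
      gcongr with j
      exacts [hw j, hLip j]
    _ = L * ∑ i, ∑ j, w j * ‖x i - ZMod.toAddCircle (j i)‖ := by
      simp_rw [Finset.sum_comm (s := Finset.univ (α := ι)), ← Finset.mul_sum, Finset.mul_sum,
        mul_left_comm]
    _ = L * ∑ i, ∑ j : ZMod (s + 2), fejerKorovkinKernel s (x i - ZMod.toAddCircle j) *
          ‖x i - ZMod.toAddCircle j‖ := by
      congr! 2 with i
      exact sum_prod_mul_apply_eq (fun i j => fejerKorovkinKernel s (x i - ZMod.toAddCircle j))
        (fun i _ => sum_fejerKorovkinKernel_sub s (x i)) fun j => ‖x i - ZMod.toAddCircle j‖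
    _ ≤ L * ∑ _i : ι, 1 / ((s : ℝ) + 2) := by
      gcongr with i
      exact sum_fejerKorovkinKernel_mul_norm_le s (x i)
    _ = L * (Fintype.card ι / (s + 2)) := by
      rw [Finset.sum_const, Finset.card_univ, nsmul_eq_mul, mul_one_div]

end Operator

section TrigPoly

variable {d s : ℕ}

lemma trigChar_eq_prod_fourier (k : Fin d → ℤ) (z : Fin d → ℝ) :
    trigChar k z = ∏ i, fourier (k i) (z i : UnitAddCircle) := by
  simp only [trigChar, fourier_coe_apply, ← Complex.exp_sum, Finset.mul_sum, Complex.ofReal_one,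
    div_one, mul_assoc]

lemma isTrigPoly_iff_exists_sum_piFinset {t : (Fin d → ℝ) → ℝ} :
    IsTrigPoly s t ↔ ∃ c : (Fin d → ℤ) → ℂ, ∀ z, (t z : ℂ) =
      ∑ k ∈ Fintype.piFinset fun _ => Finset.Icc (-(s : ℤ)) s, c k * trigChar k z := by
  have mem_box (k : Fin d → ℤ) :
      (k ∈ Fintype.piFinset fun _ => Finset.Icc (-(s : ℤ)) s) ↔ ∀ i, |k i| ≤ s := by
    simp only [Fintype.mem_piFinset, Finset.mem_Icc, abs_le]
  constructor
  · rintro ⟨S, c, hS, ht⟩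
    refine ⟨fun k => if k ∈ S then c k else 0, fun z => ?_⟩
    simp only [ht, ite_mul, zero_mul, Finset.sum_ite_mem]
    rw [Finset.inter_eq_right.mpr fun k hk => (mem_box k).mpr (hS k hk)]
  · rintro ⟨c, hc⟩
    exact ⟨_, c, fun k hk => (mem_box k).mp hk, hc⟩

lemma IsTrigPoly.sum_mul_const {α : Type*} {I : Finset α} {t : α → (Fin d → ℝ) → ℝ}
    (ht : ∀ j ∈ I, IsTrigPoly s (t j)) (b : α → ℝ) :
    IsTrigPoly s fun z => ∑ j ∈ I, t j z * b j := by
  simp only [isTrigPoly_iff_exists_sum_piFinset] at ht ⊢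
  choose! c hc using ht
  refine ⟨fun k => ∑ j ∈ I, c j k * b j, fun z => ?_⟩
  simp only [Finset.sum_mul, Complex.ofReal_sum, Complex.ofReal_mul]
  rw [Finset.sum_comm]
  refine Finset.sum_congr rfl fun j hj => ?_
  rw [hc j hj z, Finset.sum_mul]
  exact Finset.sum_congr rfl fun k _ => mul_right_comm _ _ _

lemma isTrigPoly_prod {p : Fin d → UnitAddCircle → ℝ}
    (hp : ∀ i, ∃ c : ℤ → ℂ, ∀ u, (p i u : ℂ) = ∑ m ∈ Finset.Icc (-(s : ℤ)) s, c m * fourier m u) :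
    IsTrigPoly s fun z => ∏ i, p i (z i) := by
  choose c hc using hp
  refine isTrigPoly_iff_exists_sum_piFinset.mpr ⟨fun k => ∏ i, c i (k i), fun z => ?_⟩
  simp only [Complex.ofReal_prod, hc, Finset.prod_univ_sum, Finset.prod_mul_distrib,
    trigChar_eq_prod_fourier]

lemma isTrigPoly_fejerKorovkinOperator (s : ℕ) (G : UnitAddTorus (Fin d) → ℝ) :
    IsTrigPoly s fun z => fejerKorovkinOperator s G fun i => z i := by
  refine IsTrigPoly.sum_mul_const (fun j _ => isTrigPoly_prod
    (p := fun i u => fejerKorovkinKernel s (u - ZMod.toAddCircle (j i))) fun i => ?_) _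
  obtain ⟨c, hc⟩ := exists_fejerKorovkinKernel_eq_sum_fourier s
  refine ⟨fun m => c m * fourier (-m) (ZMod.toAddCircle (j i)), fun u => ?_⟩
  rw [hc]
  refine Finset.sum_congr rfl fun m _ => ?_
  rw [fourier_sub]
  ring

end TrigPoly

section Periodic

variable {ι α : Type*} [DecidableEq ι]

lemma periodic_intCast_of_update_add_one [Finite ι] {g : (ι → ℝ) → α}
    (hg : ∀ z i, g (Function.update z i (z i + 1)) = g z) (n : ι → ℤ) :
    Function.Periodic g fun i => (n i : ℝ) := by
  have := Fintype.ofFinite ι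
  have period_single (i : ι) : Function.Periodic g (Pi.single i 1) := by
    intro z
    rw [← hg z i]
    congr 1
    ext l
    obtain rfl | hl := eq_or_ne l i
    · simp
    · simp [hl]
  have period_sum (S : Finset ι) : Function.Periodic g (∑ i ∈ S, n i • Pi.single i (1 : ℝ)) := by
    induction S using Finset.induction_on with
    | empty => exact fun z => by rw [Finset.sum_empty, add_zero]
    | insert i S hi ih =>
      rw [Finset.sum_insert hi]
      exact ((period_single i).zsmul (n i)).add_period ih
  convert period_sum Finset.univ using 1
  ext l
  simp [Finset.sum_apply, Pi.single_apply]

variable [Fintype ι]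

lemma dist_le_mul_dist_coe_of_update_add_one [PseudoMetricSpace α] {g : (ι → ℝ) → α} {L : NNReal}
    (hg : ∀ z i, g (Function.update z i (z i + 1)) = g z) (hL : LipschitzWith L g) (y z : ι → ℝ) :
    dist (g y) (g z) ≤
      L * dist (fun i => (y i : UnitAddCircle)) fun i => (z i : UnitAddCircle) := by
  rw [← periodic_intCast_of_update_add_one hg (fun i => round (y i - z i)) z]
  refine (hL.dist_le_mul _ _).trans ?_
  gcongr
  refine (dist_pi_le_iff dist_nonneg).mpr fun i => ?_
  calc _ = dist (y i : UnitAddCircle) (z i) := by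
        rw [Real.dist_eq, Pi.add_apply, ← sub_sub, ← UnitAddCircle.norm_eq, AddCircle.coe_sub,
          dist_eq_norm]
    _ ≤ _ := dist_le_pi_dist (fun i => (y i : UnitAddCircle)) (fun i => (z i : UnitAddCircle)) i

lemma exists_lipschitzWith_unitAddTorus_lift [MetricSpace α] {g : (ι → ℝ) → α} {L : NNReal}
    (hg : ∀ z i, g (Function.update z i (z i + 1)) = g z) (hL : LipschitzWith L g) :
    ∃ G : UnitAddTorus ι → α, LipschitzWith L G ∧ ∀ z : ι → ℝ, G (fun i => z i) = g z := by
  obtain ⟨rep, hrep⟩ : ∃ rep : UnitAddCircle → ℝ, ∀ u, (rep u : UnitAddCircle) = u :=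
    QuotientAddGroup.mk_surjective.hasRightInverse
  refine ⟨fun u => g fun i => rep (u i), LipschitzWith.of_dist_le_mul fun u v => ?_, fun z => ?_⟩
  · simpa only [hrep] using
      dist_le_mul_dist_coe_of_update_add_one hg hL (fun i => rep (u i)) fun i => rep (v i)
  · refine dist_le_zero.mp ((dist_le_mul_dist_coe_of_update_add_one hg hL _ _).trans_eq ?_)
    simp only [hrep, dist_self, mul_zero]

end Periodic

lemma exists_isTrigPoly_abs_sub_le {d : ℕ} {g : (Fin d → ℝ) → ℝ} {L : NNReal}
    (hg : ∀ z i, g (Function.update z i (z i + 1)) = g z) (hL : LipschitzWith L g) (s : ℕ) :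
    ∃ t : (Fin d → ℝ) → ℝ, IsTrigPoly s t ∧ ∀ z, |t z - g z| ≤ L * (d / (s + 2)) := by
  obtain ⟨G, hG, hGg⟩ := exists_lipschitzWith_unitAddTorus_lift hg hL
  refine ⟨_, isTrigPoly_fejerKorovkinOperator s G, fun z => ?_⟩
  simpa only [hGg, Real.norm_eq_abs, Fintype.card_fin] using
    norm_fejerKorovkinOperator_sub_le hG s fun i => (z i : UnitAddCircle)

theorem lipschitz_one_sided_trig_approx_general {d : ℕ} {g : (Fin d → ℝ) → ℝ} {L : NNReal}
    (hg : ∀ z i, g (Function.update z i (z i + 1)) = g z) (hL : LipschitzWith L g) (s : ℕ) :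
    ∃ gs : (Fin d → ℝ) → ℝ, IsTrigPoly s gs ∧ (∀ ω, gs ω ≤ g ω) ∧
      ∀ ω, |g ω - gs ω| ≤ 2 * d * L / (s + 2) := by
  set ε : ℝ := L * (d / (s + 2)) with hε
  have hL_sub : LipschitzWith L fun ω => g ω - ε := by
    simpa only [add_zero] using hL.sub (LipschitzWith.const ε)
  obtain ⟨t, ht, hbound⟩ := exists_isTrigPoly_abs_sub_le (fun z i => by rw [hg]) hL_sub s
  have hle (ω) : t ω ≤ g ω := by linarith [(abs_le.mp (hbound ω)).2]
  refine ⟨t, ht, hle, fun ω => ?_⟩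
  calc |g ω - t ω| = g ω - t ω := abs_of_nonneg (sub_nonneg.mpr (hle ω))
    _ ≤ 2 * ε := by linarith [(abs_le.mp (hbound ω)).1]
    _ = 2 * d * L / (s + 2) := by rw [hε]; ring

lemma setIntegral_abs_Icc_zero_one_le {ι : Type*} [Fintype ι] {f : (ι → ℝ) → ℝ} {c : ℝ}
    (hf : ∀ x ∈ Set.Icc 0 1, |f x| ≤ c) : ∫ x in Set.Icc 0 1, |f x| ≤ c := by
  have hvol : volume (Set.Icc (0 : ι → ℝ) 1) = 1 := by
    simp [Real.volume_Icc_pi]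
  have hnorm := norm_setIntegral_le_of_norm_le_const (hvol.trans_lt ENNReal.one_lt_top)
    (f := fun x => |f x|) (C := c) fun x hx => by
      rw [Real.norm_eq_abs, abs_abs]
      exact hf x hx
  rw [Measure.real, hvol, ENNReal.toReal_one, mul_one] at hnorm
  exact (Real.le_norm_self _).trans hnorm

lemma div_add_two_le_mul_one_add_log_div {a b : ℝ} (ha : 0 ≤ a) (hab : a ≤ b) {s : ℕ}
    (hs : s ≠ 0) : a / (s + 2) ≤ b * (1 + Real.log s) / s := by
  have hlog : 0 ≤ Real.log s := Real.log_natCast_nonneg s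
  calc a / (s + 2) ≤ b / s := by gcongr <;> linarith
    _ ≤ b * (1 + Real.log s) / s := by
      gcongr
      exact le_mul_of_one_le_right (ha.trans hab) (by linarith)

/-- one-sided trigonometric approximation of Lipschitz periodic functions.
For every dimension `d` there is a constant `C > 0` such that: for every `g : ℝᵈ → ℝ`
1-periodic in each coordinate and Lipschitz with constant `L`, and every integer `s ≥ 2`,
there is a real trigonometric polynomial `g_s` of degree `≤ s` with `g_s ≤ g` everywhere and
`∫_{[0,1]^d} |g − g_s| ≤ C·L·(1 + ln s)/s`. -/
theorem lipschitz_one_sided_trig_approx (d : ℕ) :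
    ∃ C : ℝ, 0 < C ∧
      ∀ (g : (Fin d → ℝ) → ℝ) (L : NNReal),
        (∀ (z : Fin d → ℝ) (i : Fin d), g (Function.update z i (z i + 1)) = g z) →
        LipschitzWith L g →
        ∀ s : ℕ, 2 ≤ s →
          ∃ gs : (Fin d → ℝ) → ℝ, IsTrigPoly s gs ∧ (∀ ω, gs ω ≤ g ω) ∧
            ∫ ω in Set.Icc (0 : Fin d → ℝ) 1, |g ω - gs ω| ≤
              C * (L : ℝ) * (1 + Real.log s) / s := by
  refine ⟨2 * d + 1, by positivity, fun g L hg hL s hs => ?_⟩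
  obtain ⟨gs, hgs, hle, hbound⟩ := lipschitz_one_sided_trig_approx_general hg hL s
  exact ⟨gs, hgs, hle, (setIntegral_abs_Icc_zero_one_le fun ω _ => hbound ω).trans
    (div_add_two_le_mul_one_add_log_div (by positivity) (by gcongr; linarith) (by omega))⟩
end

section
/- Let [a, b] ⊂ ℝ be a compact interval and let f : ℝⁿ × [a, b] → ℝ be such that for each ω, x ↦ f(x, ω) is a real trigonometric polynomial of degree ≤ 2r (1-periodic in each coordinate of x) whose Fourier coefficients are polynomial functions of ω. Set c*(ω) = inf_{x ∈ [0,1]ⁿ} f(x, ω). For an integer s_p ≥ 1 let ω_i = a + (i−1)(b−a)/s_p for i = 1, …, s_p (with ω_{s_p+1} = b), and for each i define c*_s(ω_i) = sup{ c ∈ ℝ : f(·, ω_i) − c is a finite sum of squares of real trigonometric polynomials of degree ≤ s on ℝⁿ }, and let c*_s : [a, b] → ℝ be the step function equal to c*_s(ω_i) on [ω_i, ω_{i+1}). Then there exists a constant C > 0 depending only on f such that for every integer s with s² > 6r²: ∫_a^b (c*(ω) − c*_s(ω)) dω ≤ max_i ‖f(·, ω_i) − f̄(·, ω_i)‖_F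 · [(1 − 6r²/s²)^{−n} − 1] · (b − a) + C/s_p. In particular, choosing s_p ≥ s² yields ∫_a^b (c*(ω) − c*_s(ω)) dω ≤ C′/s² for a constant C′ depending only on f, r, n and (b − a). -/
open MeasureTheory

/-- `fCoeff g k` is the `k`-th Fourier coefficient of the 1-periodic function `g : ℝⁿ → ℝ`. -/
noncomputable def fCoeff {m : ℕ} (g : (Fin m → ℝ) → ℝ) (k : Fin m → ℤ) : ℂ :=
  ∫ z in Set.Icc (0 : Fin m → ℝ) 1, (g z : ℂ) * trigChar (-k) z

/-- `Fnorm g = Σ_k |ĝ(k)|`, the ℓ¹ norm of the Fourier coefficients of `g`. -/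
noncomputable def Fnorm {m : ℕ} (g : (Fin m → ℝ) → ℝ) : ℝ :=
  ∑' k : Fin m → ℤ, ‖fCoeff g k‖

/-- `bestSOS n s g` is the best degree-`s` sum-of-squares lower bound for `g : ℝⁿ → ℝ`:
`sup { c ∈ ℝ : g − c` is a finite sum of squares of real trigonometric polynomials of
degree `≤ s }`. -/
noncomputable def bestSOS (n s : ℕ) (g : (Fin n → ℝ) → ℝ) : ℝ :=
  sSup {c : ℝ | ∃ (K : ℕ) (h : Fin K → (Fin n → ℝ) → ℝ),
    (∀ k, IsTrigPoly s (h k)) ∧ ∀ x, g x - c = ∑ k, (h k x) ^ 2}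

/-- `cstar n f ω = inf_{x ∈ [0,1]ⁿ} f(x, ω)`, the optimal lower-bounding function. -/
noncomputable def cstar (n : ℕ) (f : (Fin n → ℝ) → ℝ → ℝ) (ω : ℝ) : ℝ :=
  sInf ((fun x => f x ω) '' Set.Icc (0 : Fin n → ℝ) 1)

/-- `gridPt a b sp i = a + i·(b − a)/sp`, the `i`-th point of the equidistant grid
`ω_1, …, ω_{sp}` on `[a, b]` (indexed here from `i = 0`). -/
noncomputable def gridPt (a b : ℝ) (sp i : ℕ) : ℝ := a + (i : ℝ) * (b - a) / sp

/-- The piecewise-constant lower-bounding function `c*_s`: on each grid cell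
`[ω_i, ω_{i+1})` it takes the value `bestSOS` of `x ↦ f(x, ω_i)` at the left grid point. -/
noncomputable def stepSOS (n s : ℕ) (f : (Fin n → ℝ) → ℝ → ℝ) (a b : ℝ) (sp : ℕ)
    (ω : ℝ) : ℝ :=
  bestSOS n s (fun x => f x (gridPt a b sp (min ⌊(ω - a) * sp / (b - a)⌋₊ (sp - 1))))

/-!
Let `a` be an even sequence supported on `[-s, s]` and let `K` be the kernel `∏ᵢ ∑ⱼ aⱼ cos(2πjzᵢ)`.
Convolution with `K²` over a fine enough grid of the torus multiplies the character of frequency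
`k` by `∏ᵢ (a ⋆ a)(kᵢ)`. A trigonometric polynomial `g` is therefore the convolution of `K²` with a
function `w`, obtained by dividing the Fourier coefficients of `g` by normalised multipliers
`Λ(k) ≤ 1`. If `m ≤ g` and `Λ ≥ δⁿ`, then `w ≥ m - ‖g - ḡ‖_F (δ⁻ⁿ - 1)`, so `g` minus the right
side is a nonnegative combination of the squares `K(x - y)²`, `y` in the grid.

For `aⱼ = cos(πj / (2(s+1)))` the ratio `(a ⋆ a)(1) / (a ⋆ a)(0)` is `cos(π / (2(s+1)))`. Since
`1 - cos kθ ≤ k² (1 - cos θ)`, this gives `(a ⋆ a)(k) / (a ⋆ a)(0) ≥ 1 - 6r²/s²` for `|k| ≤ 2r`.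

The infimum `c*` inherits the Lipschitz constant of `f` in `ω`, so passing from `ω` to the left end
of its cell costs `O(1/sp)`.
-/

open scoped FourierTransform NNReal

variable {n d s N : ℕ}

/-! ### Characters and Fourier coefficients -/

lemma trigChar_eq_prod (k : Fin n → ℤ) (z : Fin n → ℝ) :
    trigChar k z = ∏ i, (𝐞 ((k i : ℝ) * z i) : ℂ) := by
  rw [trigChar, Finset.mul_sum, Complex.exp_sum]
  refine Finset.prod_congr rfl fun i _ => ?_
  rw [Real.fourierChar_apply]
  push_cast
  ring_nf

lemma norm_trigChar (k : Fin n → ℤ) (z : Fin n → ℝ) : ‖trigChar k z‖ = 1 := by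
  simp [trigChar_eq_prod, Circle.norm_coe]

lemma trigChar_zero (z : Fin n → ℝ) : trigChar 0 z = 1 := by simp [trigChar]

lemma trigChar_add (j k : Fin n → ℤ) (z : Fin n → ℝ) :
    trigChar (j + k) z = trigChar j z * trigChar k z := by
  simp [trigChar_eq_prod, add_mul, AddChar.map_add_eq_mul, Finset.prod_mul_distrib]

lemma trigChar_sub_right (k : Fin n → ℤ) (x y : Fin n → ℝ) :
    trigChar k (x - y) = trigChar k (-y) * trigChar k x := by
  simp [trigChar_eq_prod, sub_eq_neg_add, mul_add, AddChar.map_add_eq_mul,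
    Finset.prod_mul_distrib]

lemma continuous_trigChar (k : Fin n → ℤ) : Continuous (trigChar k) := by
  unfold trigChar
  fun_prop

lemma integral_fourierChar_intCast_mul (m : ℤ) :
    ∫ t in Set.Icc (0 : ℝ) 1, (𝐞 (m * t) : ℂ) = if m = 0 then 1 else 0 := by
  split_ifs with h
  · simp [h]
  · have hm : 2 * Real.pi * Complex.I * m ≠ 0 :=
      mul_ne_zero Complex.two_pi_I_ne_zero (Int.cast_ne_zero.2 h)
    have hexp (t : ℝ) : (𝐞 (m * t) : ℂ) = Complex.exp (2 * Real.pi * Complex.I * m * t) := by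
      rw [Real.fourierChar_apply]
      push_cast
      ring_nf
    have hone : Complex.exp (2 * Real.pi * Complex.I * m) = 1 :=
      Complex.exp_eq_one_iff.2 ⟨m, by ring⟩
    simp_rw [hexp, integral_Icc_eq_integral_Ioc]
    rw [← intervalIntegral.integral_of_le zero_le_one, integral_exp_mul_complex hm]
    simp [hone]

lemma integral_trigChar (k : Fin n → ℤ) :
    ∫ z in Set.Icc (0 : Fin n → ℝ) 1, trigChar k z = if k = 0 then 1 else 0 := by
  have hvol : (volume : Measure (Fin n → ℝ)).restrict (Set.Icc 0 1) =
      Measure.pi fun _ => volume.restrict (Set.Icc (0 : ℝ) 1) := by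
    rw [← Set.pi_univ_Icc, volume_pi, Measure.restrict_pi_pi]
    rfl
  simp only [hvol, trigChar_eq_prod]
  rw [integral_fintype_prod_eq_prod fun i (t : ℝ) => (𝐞 ((k i : ℝ) * t) : ℂ)]
  simp [integral_fourierChar_intCast_mul, Finset.prod_ite_zero, funext_iff]

lemma fCoeff_of_eq_sum {g : (Fin n → ℝ) → ℝ} {S : Finset (Fin n → ℤ)} {c : (Fin n → ℤ) → ℂ}
    (hg : ∀ x, (g x : ℂ) = ∑ k ∈ S, c k * trigChar k x) (k : Fin n → ℤ) :
    fCoeff g k = if k ∈ S then c k else 0 := by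
  have hmul (z : Fin n → ℝ) :
      (g z : ℂ) * trigChar (-k) z = ∑ j ∈ S, c j * trigChar (j - k) z := by
    simp only [hg, Finset.sum_mul, mul_assoc, sub_eq_add_neg, trigChar_add]
  simp only [fCoeff, hmul]
  rw [integral_finsetSum _ fun j _ => ((continuous_trigChar _).const_mul
    (c j)).continuousOn.integrableOn_compact isCompact_Icc]
  simp only [integral_const_mul, integral_trigChar, sub_eq_zero, mul_ite, mul_one, mul_zero]
  exact Finset.sum_ite_eq' S k c

lemma Fnorm_of_eq_sum {g : (Fin n → ℝ) → ℝ} {S : Finset (Fin n → ℤ)} {c : (Fin n → ℤ) → ℂ}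
    (hg : ∀ x, (g x : ℂ) = ∑ k ∈ S, c k * trigChar k x) : Fnorm g = ∑ k ∈ S, ‖c k‖ := by
  simp only [Fnorm, fCoeff_of_eq_sum hg]
  rw [tsum_eq_sum (s := S) fun k hk => by simp [hk]]
  exact Finset.sum_congr rfl fun k hk => by rw [if_pos hk]

lemma fCoeff_zero (g : (Fin n → ℝ) → ℝ) :
    fCoeff g 0 = ((∫ y in Set.Icc (0 : Fin n → ℝ) 1, g y : ℝ) : ℂ) := by
  simp [fCoeff, trigChar_zero, integral_complex_ofReal]

lemma norm_fCoeff_le {g : (Fin n → ℝ) → ℝ} {M : ℝ}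
    (hM : ∀ x ∈ Set.Icc (0 : Fin n → ℝ) 1, |g x| ≤ M) (k : Fin n → ℤ) : ‖fCoeff g k‖ ≤ M := by
  have hvol : volume.real (Set.Icc (0 : Fin n → ℝ) 1) = 1 := by
    simp [Measure.real, Real.volume_Icc_pi]
  have h := norm_setIntegral_le_of_norm_le_const (μ := volume) (C := M)
    (f := fun z => (g z : ℂ) * trigChar (-k) z) isCompact_Icc.measure_lt_top fun z hz => by
      simpa [norm_trigChar] using hM z hz
  rwa [hvol, mul_one] at h

/-- The box of frequencies `k ∈ ℤⁿ` with `‖k‖_∞ ≤ d`, the spectrum of the trigonometric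
polynomials of degree `≤ d`. -/
noncomputable def freqBox (n d : ℕ) : Finset (Fin n → ℤ) :=
  Fintype.piFinset fun _ => Finset.Icc (-d : ℤ) d

lemma mem_freqBox {k : Fin n → ℤ} : k ∈ freqBox n d ↔ ∀ i, |k i| ≤ d := by
  simp [freqBox, abs_le]

lemma card_freqBox (n d : ℕ) : (freqBox n d).card = (2 * d + 1) ^ n := by
  have h : ((d : ℤ) + 1 + d).toNat = 2 * d + 1 := by omega
  simp [freqBox, Fintype.card_piFinset, h]

/-- `‖g − ḡ‖_F`, the `ℓ¹` norm of the Fourier coefficients of `g` after its mean over the unit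
cube has been subtracted. -/
noncomputable def centeredFnorm (g : (Fin n → ℝ) → ℝ) : ℝ :=
  Fnorm fun x => g x - ∫ y in Set.Icc (0 : Fin n → ℝ) 1, g y

lemma centeredFnorm_nonneg (g : (Fin n → ℝ) → ℝ) : 0 ≤ centeredFnorm g :=
  tsum_nonneg fun _ => norm_nonneg _

namespace IsTrigPoly

variable {g : (Fin n → ℝ) → ℝ}

lemma eq_sum_fCoeff (hg : IsTrigPoly d g) (x : Fin n → ℝ) :
    (g x : ℂ) = ∑ k ∈ freqBox n d, fCoeff g k * trigChar k x := by
  obtain ⟨S, c, hS, hsum⟩ := hg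
  have hsub : S ⊆ freqBox n d := fun k hk => mem_freqBox.2 (hS k hk)
  simp only [fCoeff_of_eq_sum hsum, ite_mul, zero_mul]
  rw [← Finset.sum_filter, Finset.filter_mem_eq_inter, Finset.inter_eq_right.2 hsub, hsum]

lemma abs_le_Fnorm (hg : IsTrigPoly d g) (x : Fin n → ℝ) : |g x| ≤ Fnorm g := by
  rw [Fnorm_of_eq_sum hg.eq_sum_fCoeff, ← Real.norm_eq_abs, ← Complex.norm_real,
    hg.eq_sum_fCoeff x]
  exact norm_sum_le_of_le _ fun k _ => by rw [norm_mul, norm_trigChar, mul_one]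

lemma bddBelow_image (hg : IsTrigPoly d g) (T : Set (Fin n → ℝ)) : BddBelow (g '' T) :=
  ⟨-Fnorm g, Set.forall_mem_image.2 fun x _ => (abs_le.1 (hg.abs_le_Fnorm x)).1⟩

lemma centeredFnorm_eq (hg : IsTrigPoly d g) :
    centeredFnorm g = ∑ k ∈ (freqBox n d).erase 0, ‖fCoeff g k‖ := by
  have hzero : (0 : Fin n → ℤ) ∈ freqBox n d := mem_freqBox.2 fun i => by simp
  refine Fnorm_of_eq_sum fun x => ?_
  rw [Complex.ofReal_sub, ← fCoeff_zero, hg.eq_sum_fCoeff, ← Finset.add_sum_erase _ _ hzero,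
    trigChar_zero, mul_one, add_sub_cancel_left]

lemma centeredFnorm_le (hg : IsTrigPoly d g) {M : ℝ}
    (hM : ∀ x ∈ Set.Icc (0 : Fin n → ℝ) 1, |g x| ≤ M) :
    centeredFnorm g ≤ (2 * d + 1) ^ n * M := by
  calc centeredFnorm g ≤ ∑ k ∈ freqBox n d, ‖fCoeff g k‖ :=
        hg.centeredFnorm_eq.trans_le <| Finset.sum_le_sum_of_subset_of_nonneg
          (Finset.erase_subset _ _) fun _ _ _ => norm_nonneg _
    _ ≤ (freqBox n d).card • M := Finset.sum_le_card_nsmul _ _ _ fun k _ => norm_fCoeff_le hM k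
    _ = (2 * d + 1) ^ n * M := by rw [card_freqBox, nsmul_eq_mul]; push_cast; rfl

end IsTrigPoly

/-! ### Squared cosine kernels and their multipliers -/

/-- The cosine polynomial `∑_{|j| ≤ s} a_j cos(2πjt)`, a real form of `∑ a_j exp(2πijt)` when `a`
is even. -/
noncomputable def cosPoly (a : ℤ → ℝ) (s : ℕ) (t : ℝ) : ℝ :=
  ∑ j ∈ Finset.Icc (-s : ℤ) s, a j * Real.cos (2 * Real.pi * (j * t))

/-- The self-convolution `(a ⋆ a)(k)` of a sequence supported on `[-s, s]`. For even `a` these are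
the Fourier coefficients of `cosPoly a s ^ 2`. -/
noncomputable def selfConv (a : ℤ → ℝ) (s : ℕ) (k : ℤ) : ℝ :=
  ∑ j ∈ Finset.Icc (-s : ℤ) s, a j * a (k - j)

/-- The product kernel `z ↦ ∏ᵢ cosPoly a s zᵢ` on `ℝⁿ`, whose square is used for smoothing. -/
noncomputable def prodKernel (a : ℤ → ℝ) (s : ℕ) (z : Fin n → ℝ) : ℝ :=
  ∏ i, cosPoly a s (z i)

/-- The points of the grid `{0, 1/N, …, (N-1)/N}ⁿ`, indexed by `(ℤ/N)ⁿ`. -/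
noncomputable def torusGrid (y : Fin n → ZMod N) : Fin n → ℝ := fun i => ((y i).val : ℝ) / N

lemma torusGrid_mem_Icc [NeZero N] (y : Fin n → ZMod N) :
    torusGrid y ∈ Set.Icc (0 : Fin n → ℝ) 1 :=
  ⟨fun _ => by simp only [torusGrid, Pi.zero_apply]; positivity,
    fun i => div_le_one_of_le₀ (Nat.cast_le.2 (ZMod.val_lt (y i)).le) (Nat.cast_nonneg N)⟩

lemma sum_fourierChar_grid [NeZero N] {m : ℤ} (hm : |m| < N) :
    ∑ y : ZMod N, (𝐞 (m * ((y.val : ℝ) / N)) : ℂ) = if m = 0 then (N : ℂ) else 0 := by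
  have hchar (y : ZMod N) :
      (𝐞 (m * ((y.val : ℝ) / N)) : ℂ) = ZMod.stdAddChar (y * (m : ZMod N)) := by
    have hy : y * (m : ZMod N) = ((m * y.val : ℤ) : ZMod N) := by simp [mul_comm]
    rw [hy, ZMod.stdAddChar_coe, Real.fourierChar_apply]
    push_cast
    ring_nf
  have hzero : (m : ZMod N) = 0 ↔ m = 0 := by
    rw [ZMod.intCast_zmod_eq_zero_iff_dvd]
    exact ⟨fun h => Int.eq_zero_of_abs_lt_dvd h hm, by rintro rfl; exact dvd_zero _⟩
  simp only [hchar, AddChar.sum_mulShift _ (ZMod.isPrimitive_stdAddChar N), hzero, ZMod.card]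
  split_ifs <;> simp

section Kernel

variable {a : ℤ → ℝ}

lemma selfConv_neg (ha : a.Even) (s : ℕ) (k : ℤ) : selfConv a s (-k) = selfConv a s k :=
  Finset.sum_equiv (Equiv.neg ℤ) (fun j => by simp [and_comm, neg_le]) fun j _ => by
    rw [Equiv.neg_apply, ha, ← ha (-k - j)]
    ring_nf

lemma selfConv_zero (ha : a.Even) (s : ℕ) :
    selfConv a s 0 = ∑ j ∈ Finset.Icc (-s : ℤ) s, a j ^ 2 :=
  Finset.sum_congr rfl fun j _ => by rw [zero_sub, ha, sq]

lemma ofReal_cosPoly (ha : a.Even) (s : ℕ) (t : ℝ) :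
    (cosPoly a s t : ℂ) = ∑ j ∈ Finset.Icc (-s : ℤ) s, (a j : ℂ) * 𝐞 (j * t) := by
  have hodd : ∑ j ∈ Finset.Icc (-s : ℤ) s, a j * Real.sin (2 * Real.pi * (j * t)) = 0 :=
    Function.Odd.finsetSum_eq_zero (fun j => by simp [ha j])
      (Finset.map_eq_of_subset fun j => by simp; omega)
  have hexp (j : ℤ) : (𝐞 (j * t) : ℂ) =
      Real.cos (2 * Real.pi * (j * t)) + Real.sin (2 * Real.pi * (j * t)) * Complex.I := by
    rw [Real.fourierChar_apply, Complex.exp_mul_I, Complex.ofReal_cos, Complex.ofReal_sin]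
  calc (cosPoly a s t : ℂ) = cosPoly a s t +
        (∑ j ∈ Finset.Icc (-s : ℤ) s, a j * Real.sin (2 * Real.pi * (j * t)) : ℝ) *
          Complex.I := by rw [hodd, Complex.ofReal_zero, zero_mul, add_zero]
    _ = ∑ j ∈ Finset.Icc (-s : ℤ) s, (a j : ℂ) * 𝐞 (j * t) := by
        simp only [cosPoly, hexp, mul_add, Finset.sum_add_distrib, Complex.ofReal_sum,
          Complex.ofReal_mul, Finset.sum_mul, mul_assoc]

lemma cosPoly_sq_mul_fourierChar (ha : a.Even) (s : ℕ) (k : ℤ) (x y : ℝ) :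
    (cosPoly a s (x - y) : ℂ) ^ 2 * 𝐞 (k * y) =
      ∑ j ∈ Finset.Icc (-s : ℤ) s, ∑ l ∈ Finset.Icc (-s : ℤ) s,
        (a j * a l * 𝐞 ((j + l) * x) : ℂ) * 𝐞 ((k - j - l : ℤ) * y) := by
  have hchar (j l : ℤ) : (𝐞 (j * (x - y)) : ℂ) * 𝐞 (l * (x - y)) * 𝐞 (k * y) =
      𝐞 ((j + l) * x) * 𝐞 ((k - j - l : ℤ) * y) := by
    simp only [← Circle.coe_mul, ← AddChar.map_add_eq_mul]
    push_cast
    ring_nf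
  rw [sq, ofReal_cosPoly ha, Finset.sum_mul_sum, Finset.sum_mul]
  refine Finset.sum_congr rfl fun j _ => ?_
  rw [Finset.sum_mul]
  exact Finset.sum_congr rfl fun l _ => by linear_combination (a j * a l : ℂ) * hchar j l

/-- Averaging over the grid is exact on frequencies below `N`, so discrete convolution with
`cosPoly a s ^ 2` is diagonal on characters of low degree. -/
lemma sum_cosPoly_sq_mul_fourierChar (ha : a.Even) (hsupp : ∀ j : ℤ, s < |j| → a j = 0)
    [NeZero N] {k : ℤ} (hN : 2 * s + |k| < N) (x : ℝ) :
    ∑ y : ZMod N, (cosPoly a s (x - (y.val : ℝ) / N) : ℂ) ^ 2 * 𝐞 (k * ((y.val : ℝ) / N)) =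
      N * selfConv a s k * 𝐞 (k * x) := by
  have hquad : ∀ j ∈ Finset.Icc (-s : ℤ) s, ∀ l ∈ Finset.Icc (-s : ℤ) s,
      ∑ y : ZMod N, (𝐞 ((k - j - l : ℤ) * ((y.val : ℝ) / N)) : ℂ) =
        if k - j = l then (N : ℂ) else 0 := by
    intro j hj l hl
    have hlt : |k - j - l| < N := by
      rw [Finset.mem_Icc] at hj hl
      have := abs_le.1 (le_refl |k|)
      rw [abs_lt]
      constructor <;> linarith
    simp only [sum_fourierChar_grid hlt, sub_eq_zero]
  have hsum : ∀ j ∈ Finset.Icc (-s : ℤ) s,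
      ∑ l ∈ Finset.Icc (-s : ℤ) s, (a j * a l * 𝐞 ((j + l) * x) : ℂ) *
          (if k - j = l then (N : ℂ) else 0) =
        N * (a j * a (k - j) : ℝ) * 𝐞 (k * x) := by
    intro j _
    simp only [mul_ite, mul_zero, Finset.sum_ite_eq]
    split_ifs with h
    · push_cast
      ring_nf
    · have hzero : a (k - j) = 0 := hsupp _ (by rwa [Finset.mem_Icc, ← abs_le, not_le] at h)
      simp [hzero]
  simp only [cosPoly_sq_mul_fourierChar ha]
  rw [Finset.sum_comm]
  simp only [selfConv, Complex.ofReal_sum, Finset.mul_sum, Finset.sum_mul]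
  refine Finset.sum_congr rfl fun j hj => ?_
  rw [Finset.sum_comm, ← hsum j hj]
  exact Finset.sum_congr rfl fun l hl => by rw [← Finset.mul_sum, hquad j hj l hl]

lemma sum_cosPoly_sq_mul_cos (ha : a.Even) (hsupp : ∀ j : ℤ, s < |j| → a j = 0)
    [NeZero N] {k : ℤ} (hN : 2 * s + |k| < N) :
    ∑ y : ZMod N, cosPoly a s (-((y.val : ℝ) / N)) ^ 2 *
      Real.cos (k * (2 * Real.pi * ((y.val : ℝ) / N))) = N * selfConv a s k := by
  have h := congrArg Complex.re (sum_cosPoly_sq_mul_fourierChar ha hsupp hN 0)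
  simp only [zero_sub, mul_zero, AddChar.map_zero_eq_one, Circle.coe_one, mul_one,
    Complex.re_sum, ← Complex.ofReal_pow, Complex.re_ofReal_mul, Real.fourierChar_apply,
    Complex.exp_ofReal_mul_I_re] at h
  have hre : ((N : ℂ) * selfConv a s k).re = N * selfConv a s k := by
    rw [← Complex.ofReal_natCast, ← Complex.ofReal_mul, Complex.ofReal_re]
  rw [hre] at h
  rw [← h]
  exact Finset.sum_congr rfl fun y _ => by ring_nf

lemma mul_selfConv_zero_sub_selfConv (ha : a.Even) (hsupp : ∀ j : ℤ, s < |j| → a j = 0)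
    [NeZero N] {k : ℤ} (hN : 2 * s + |k| < N) :
    N * (selfConv a s 0 - selfConv a s k) =
      ∑ y : ZMod N, cosPoly a s (-((y.val : ℝ) / N)) ^ 2 *
        (1 - Real.cos (k * (2 * Real.pi * ((y.val : ℝ) / N)))) := by
  have hN₀ : 2 * (s : ℤ) + |0| < N := by
    rw [abs_zero]
    linarith [abs_nonneg k]
  rw [mul_sub, ← sum_cosPoly_sq_mul_cos ha hsupp hN, ← sum_cosPoly_sq_mul_cos ha hsupp hN₀,
    ← Finset.sum_sub_distrib]
  exact Finset.sum_congr rfl fun y _ => by simp [mul_sub]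

lemma selfConv_le_selfConv_zero (ha : a.Even) (hsupp : ∀ j : ℤ, s < |j| → a j = 0) (k : ℤ) :
    selfConv a s k ≤ selfConv a s 0 := by
  obtain ⟨N, hN⟩ := exists_nat_gt (2 * s + |k|)
  have hpos : 0 < N := by
    have : 0 ≤ 2 * (s : ℤ) + |k| := by positivity
    omega
  have : NeZero N := ⟨hpos.ne'⟩
  refine sub_nonneg.1 (nonneg_of_mul_nonneg_right ?_ (Nat.cast_pos.2 hpos))
  rw [mul_selfConv_zero_sub_selfConv ha hsupp hN]
  exact Finset.sum_nonneg fun y _ =>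
    mul_nonneg (sq_nonneg _) (sub_nonneg.2 (Real.cos_le_one _))

lemma abs_sin_nat_mul_le (m : ℕ) (x : ℝ) : |Real.sin (m * x)| ≤ m * |Real.sin x| := by
  induction m with
  | zero => simp
  | succ m ih =>
    calc |Real.sin ((m + 1 : ℕ) * x)|
        = |Real.sin (m * x) * Real.cos x + Real.cos (m * x) * Real.sin x| := by
          rw [← Real.sin_add]; push_cast; ring_nf
      _ ≤ |Real.sin (m * x)| * |Real.cos x| + |Real.cos (m * x)| * |Real.sin x| := by
          rw [← abs_mul, ← abs_mul]; exact abs_add_le _ _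
      _ ≤ m * |Real.sin x| * 1 + 1 * |Real.sin x| := by
          gcongr <;> exact Real.abs_cos_le_one _
      _ = (m + 1 : ℕ) * |Real.sin x| := by push_cast; ring

lemma one_sub_cos_int_mul_le (k : ℤ) (x : ℝ) :
    1 - Real.cos (k * x) ≤ k ^ 2 * (1 - Real.cos x) := by
  have hhalf (y : ℝ) : 1 - Real.cos y = 2 * Real.sin (y / 2) ^ 2 := by
    rw [Real.sin_sq_eq_half_sub, mul_div_cancel₀ y two_ne_zero]
    ring
  have hnat (m : ℕ) : 1 - Real.cos (m * x) ≤ (m : ℝ) ^ 2 * (1 - Real.cos x) := by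
    have h := pow_le_pow_left₀ (abs_nonneg _) (abs_sin_nat_mul_le m (x / 2)) 2
    rw [mul_pow, sq_abs, sq_abs] at h
    rw [hhalf, hhalf, mul_div_assoc]
    linarith
  obtain ⟨m, rfl | rfl⟩ := Int.eq_nat_or_neg k
  · exact_mod_cast hnat m
  · simpa using hnat m

/-- `selfConv a s` is a cosine transform of a nonnegative measure, so `1 - cos kθ ≤ k²(1 - cos θ)`
may be integrated against it. -/
lemma selfConv_zero_sub_selfConv_le (ha : a.Even) (hsupp : ∀ j : ℤ, s < |j| → a j = 0) (k : ℤ) :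
    selfConv a s 0 - selfConv a s k ≤ k ^ 2 * (selfConv a s 0 - selfConv a s 1) := by
  obtain ⟨N, hN⟩ := exists_nat_gt (2 * s + |k| + 1)
  have hpos : 0 < N := by
    have : 0 ≤ 2 * (s : ℤ) + |k| := by positivity
    omega
  have : NeZero N := ⟨hpos.ne'⟩
  have hNk : 2 * (s : ℤ) + |k| < N := by linarith
  have hN₁ : 2 * (s : ℤ) + |1| < N := by
    rw [abs_one]
    linarith [abs_nonneg k]
  refine le_of_mul_le_mul_left ?_ (Nat.cast_pos.2 hpos : (0 : ℝ) < N)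
  rw [mul_left_comm, mul_selfConv_zero_sub_selfConv ha hsupp hNk,
    mul_selfConv_zero_sub_selfConv ha hsupp hN₁, Finset.mul_sum]
  refine Finset.sum_le_sum fun y _ => ?_
  rw [mul_left_comm ((k : ℝ) ^ 2), Int.cast_one, one_mul]
  exact mul_le_mul_of_nonneg_left (one_sub_cos_int_mul_le k _) (sq_nonneg _)

/-- The factor by which convolution with `prodKernel a s ^ 2`, normalised to mass one, multiplies
the character of frequency `k`. -/
noncomputable def multiplier (a : ℤ → ℝ) (s : ℕ) (k : Fin n → ℤ) : ℝ :=
  ∏ i, selfConv a s (k i) / selfConv a s 0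

/-- The degree `d` part of the preimage of `g` under normalised convolution with
`prodKernel a s ^ 2`, obtained by dividing each Fourier coefficient by its multiplier. -/
noncomputable def deconvolution (a : ℤ → ℝ) (s d : ℕ) (g : (Fin n → ℝ) → ℝ) (y : Fin n → ℝ) : ℝ :=
  (∑ k ∈ freqBox n d, fCoeff g k * (multiplier a s k : ℂ)⁻¹ * trigChar k y).re

lemma ofReal_prodKernel (ha : a.Even) (s : ℕ) (z : Fin n → ℝ) :
    (prodKernel a s z : ℂ) = ∑ k ∈ freqBox n s, (∏ i, (a (k i) : ℂ)) * trigChar k z := by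
  simp only [prodKernel, Complex.ofReal_prod, ofReal_cosPoly ha, Finset.prod_univ_sum,
    Finset.prod_mul_distrib, trigChar_eq_prod, freqBox]

lemma isTrigPoly_mul_prodKernel_sub (ha : a.Even) (s : ℕ) (c : ℝ) (y : Fin n → ℝ) :
    IsTrigPoly s fun x => c * prodKernel a s (x - y) := by
  refine ⟨freqBox n s, fun k => c * ((∏ i, (a (k i) : ℂ)) * trigChar k (-y)),
    fun k hk => mem_freqBox.1 hk, fun x => ?_⟩
  rw [Complex.ofReal_mul, ofReal_prodKernel ha, Finset.mul_sum]
  exact Finset.sum_congr rfl fun k _ => by rw [trigChar_sub_right]; ring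

lemma multiplier_zero (hφ : selfConv a s 0 ≠ 0) : multiplier a s (0 : Fin n → ℤ) = 1 := by
  simp [multiplier, hφ]

lemma pow_le_multiplier {δ : ℝ} {k : Fin n → ℤ} (hδ : 0 ≤ δ) (hφ : 0 < selfConv a s 0)
    (hk : ∀ i, δ * selfConv a s 0 ≤ selfConv a s (k i)) : δ ^ n ≤ multiplier a s k := by
  have h := Finset.prod_le_prod (s := Finset.univ) (fun _ _ => hδ) fun i _ =>
    (le_div_iff₀ hφ).2 (hk i)
  rwa [Fin.prod_const] at h

lemma multiplier_le_one (ha : a.Even) (hsupp : ∀ j : ℤ, s < |j| → a j = 0) {k : Fin n → ℤ}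
    (hφ : 0 < selfConv a s 0) (hk : ∀ i, 0 ≤ selfConv a s (k i)) : multiplier a s k ≤ 1 :=
  Finset.prod_le_one (fun i _ => div_nonneg (hk i) hφ.le) fun i _ =>
    (div_le_one hφ).2 (selfConv_le_selfConv_zero ha hsupp (k i))

lemma abs_inv_multiplier_sub_one_le (ha : a.Even) (hsupp : ∀ j : ℤ, s < |j| → a j = 0) {δ : ℝ}
    {k : Fin n → ℤ} (hδ : 0 < δ) (hφ : 0 < selfConv a s 0)
    (hk : ∀ i, δ * selfConv a s 0 ≤ selfConv a s (k i)) :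
    |(multiplier a s k)⁻¹ - 1| ≤ (δ ^ n)⁻¹ - 1 := by
  have hlow := pow_le_multiplier hδ.le hφ hk
  have hup := multiplier_le_one ha hsupp hφ fun i => (mul_pos hδ hφ).le.trans (hk i)
  have hpos : 0 < δ ^ n := pow_pos hδ n
  rw [abs_of_nonneg (sub_nonneg.2 ((one_le_inv₀ (hpos.trans_le hlow)).2 hup))]
  exact sub_le_sub_right (inv_anti₀ hpos hlow) 1

lemma sum_prodKernel_sq_mul_trigChar (ha : a.Even) (hsupp : ∀ j : ℤ, s < |j| → a j = 0)
    (hφ : selfConv a s 0 ≠ 0) [NeZero N] {k : Fin n → ℤ} (hN : ∀ i, 2 * s + |k i| < N)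
    (x : Fin n → ℝ) :
    ∑ y : Fin n → ZMod N, (prodKernel a s (x - torusGrid y) : ℂ) ^ 2 * trigChar k (torusGrid y) =
      ((N * selfConv a s 0) ^ n : ℝ) * multiplier a s k * trigChar k x := by
  have hprod (y : Fin n → ZMod N) :
      (prodKernel a s (x - torusGrid y) : ℂ) ^ 2 * trigChar k (torusGrid y) =
        ∏ i, (cosPoly a s (x i - ((y i).val : ℝ) / N) : ℂ) ^ 2 *
          𝐞 (k i * (((y i).val : ℝ) / N)) := by
    simp only [prodKernel, trigChar_eq_prod, Complex.ofReal_prod, Finset.prod_pow,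
      Finset.prod_mul_distrib, Pi.sub_apply, torusGrid]
  have hscale : (N * selfConv a s 0) ^ n * multiplier a s k = ∏ i, N * selfConv a s (k i) := by
    rw [multiplier, ← Fin.prod_const, ← Finset.prod_mul_distrib]
    exact Finset.prod_congr rfl fun i _ => by field_simp
  simp only [hprod]
  rw [← Fintype.piFinset_univ, ← Finset.prod_univ_sum (fun _ => Finset.univ) fun i (v : ZMod N) =>
    (cosPoly a s (x i - (v.val : ℝ) / N) : ℂ) ^ 2 * 𝐞 (k i * ((v.val : ℝ) / N)),
    ← Complex.ofReal_mul, hscale, trigChar_eq_prod, Complex.ofReal_prod,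
    ← Finset.prod_mul_distrib]
  refine Finset.prod_congr rfl fun i _ => ?_
  rw [sum_cosPoly_sq_mul_fourierChar ha hsupp (hN i)]
  push_cast
  rfl

lemma sum_prodKernel_sq (ha : a.Even) (hsupp : ∀ j : ℤ, s < |j| → a j = 0)
    (hφ : selfConv a s 0 ≠ 0) [NeZero N] (hN : 2 * s < N) (x : Fin n → ℝ) :
    ∑ y : Fin n → ZMod N, prodKernel a s (x - torusGrid y) ^ 2 = (N * selfConv a s 0) ^ n := by
  have hN' : ∀ i : Fin n, 2 * (s : ℤ) + |(0 : Fin n → ℤ) i| < N := fun i => by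
    simpa using mod_cast hN
  have h := sum_prodKernel_sq_mul_trigChar ha hsupp hφ hN' x
  simp only [trigChar_zero, mul_one, multiplier_zero hφ, Complex.ofReal_one] at h
  exact_mod_cast h

lemma sum_deconvolution_mul_prodKernel_sq (ha : a.Even) (hsupp : ∀ j : ℤ, s < |j| → a j = 0)
    (hφ : selfConv a s 0 ≠ 0) [NeZero N] (hN : 2 * s + d < N) {g : (Fin n → ℝ) → ℝ}
    (hg : IsTrigPoly d g) (hmul : ∀ k ∈ freqBox n d, multiplier a s k ≠ 0) (x : Fin n → ℝ) :
    ∑ y : Fin n → ZMod N,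
        deconvolution a s d g (torusGrid y) * prodKernel a s (x - torusGrid y) ^ 2 =
      (N * selfConv a s 0) ^ n * g x := by
  have hcoeff : ∀ k ∈ freqBox n d, ∑ y : Fin n → ZMod N,
      fCoeff g k * (multiplier a s k : ℂ)⁻¹ * trigChar k (torusGrid y) *
        (prodKernel a s (x - torusGrid y) : ℂ) ^ 2 =
      ((N * selfConv a s 0) ^ n : ℝ) * (fCoeff g k * trigChar k x) := by
    intro k hk
    have hN' : ∀ i, 2 * (s : ℤ) + |k i| < N := fun i => by
      have := mem_freqBox.1 hk i
      omega
    have hne : (multiplier a s k : ℂ) ≠ 0 := Complex.ofReal_ne_zero.2 (hmul k hk)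
    have h := sum_prodKernel_sq_mul_trigChar ha hsupp hφ hN' x
    calc _ = fCoeff g k * (multiplier a s k : ℂ)⁻¹ * ∑ y : Fin n → ZMod N,
          (prodKernel a s (x - torusGrid y) : ℂ) ^ 2 * trigChar k (torusGrid y) := by
          rw [Finset.mul_sum]
          exact Finset.sum_congr rfl fun y _ => by ring
      _ = _ := by
          rw [h]
          field_simp
  have hsum : ∑ y : Fin n → ZMod N,
      (∑ k ∈ freqBox n d, fCoeff g k * (multiplier a s k : ℂ)⁻¹ * trigChar k (torusGrid y)) *
        (prodKernel a s (x - torusGrid y) ^ 2 : ℝ) = ((N * selfConv a s 0) ^ n * g x : ℝ) := by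
    simp only [Finset.sum_mul, Complex.ofReal_pow]
    rw [Finset.sum_comm, Finset.sum_congr rfl hcoeff, ← Finset.mul_sum, ← hg.eq_sum_fCoeff,
      Complex.ofReal_mul]
  simpa only [deconvolution, Complex.re_sum, Complex.re_mul_ofReal, Complex.ofReal_re] using
    congrArg Complex.re hsum

lemma abs_deconvolution_sub_le {g : (Fin n → ℝ) → ℝ} (hg : IsTrigPoly d g)
    (hφ : selfConv a s 0 ≠ 0) {ε : ℝ}
    (hmul : ∀ k ∈ freqBox n d, |(multiplier a s k)⁻¹ - 1| ≤ ε) (y : Fin n → ℝ) :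
    |deconvolution a s d g y - g y| ≤ centeredFnorm g * ε := by
  have hzero : (0 : Fin n → ℤ) ∈ freqBox n d := mem_freqBox.2 fun i => by simp
  have hdiff : deconvolution a s d g y - g y = (∑ k ∈ (freqBox n d).erase 0,
      fCoeff g k * (((multiplier a s k)⁻¹ - 1 : ℝ) : ℂ) * trigChar k y).re := by
    rw [deconvolution, ← Complex.ofReal_re (g y), hg.eq_sum_fCoeff, ← Complex.sub_re,
      ← Finset.sum_sub_distrib, ← Finset.add_sum_erase _ _ hzero, multiplier_zero hφ]
    simp only [Complex.ofReal_one, inv_one, mul_one, sub_self, zero_add, Complex.ofReal_sub,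
      Complex.ofReal_inv, mul_sub, sub_mul]
  rw [hdiff, hg.centeredFnorm_eq, Finset.sum_mul]
  refine (Complex.abs_re_le_norm _).trans (norm_sum_le_of_le _ fun k hk => ?_)
  rw [norm_mul, norm_mul, norm_trigChar, mul_one, Complex.norm_real, Real.norm_eq_abs]
  exact mul_le_mul_of_nonneg_left (hmul k (Finset.mem_of_mem_erase hk)) (norm_nonneg _)

end Kernel

/-- The sequence `j ↦ cos(πj / (2(s+1)))` cut off outside `[-s, s]`. Among the sequences supported
there it maximises `selfConv a s 1 / selfConv a s 0`. -/
noncomputable def cosWindow (s : ℕ) (j : ℤ) : ℝ :=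
  if |j| ≤ s then Real.cos (Real.pi / (2 * (s + 1)) * j) else 0

lemma cosWindow_even (s : ℕ) : (cosWindow s).Even := fun j => by simp [cosWindow]

lemma cosWindow_eq_zero {j : ℤ} (hj : s < |j|) : cosWindow s j = 0 := if_neg hj.not_ge

lemma cosWindow_of_abs_le_succ {j : ℤ} (hj : |j| ≤ s + 1) :
    cosWindow s j = Real.cos (Real.pi / (2 * (s + 1)) * j) := by
  rcases hj.lt_or_eq with hlt | heq
  · exact if_pos (Int.lt_add_one_iff.1 hlt)
  · have habs : |(j : ℝ)| = s + 1 := by exact_mod_cast heq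
    rw [cosWindow_eq_zero (by omega), ← Real.cos_abs, abs_mul, habs, abs_of_pos (by positivity),
      show Real.pi / (2 * (s + 1)) * (s + 1) = Real.pi / 2 by field_simp, Real.cos_pi_div_two]

lemma selfConv_cosWindow_zero_pos (s : ℕ) : 0 < selfConv (cosWindow s) s 0 := by
  rw [selfConv_zero (cosWindow_even s)]
  exact Finset.sum_pos' (fun _ _ => sq_nonneg _) ⟨0, by simp, by simp [cosWindow]⟩

/-- The window is an eigenvector of `a ↦ (a(· + 1) + a(· - 1)) / 2` on `[-s, s]` with Dirichlet
boundary conditions. -/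
lemma selfConv_cosWindow_one (s : ℕ) :
    selfConv (cosWindow s) s 1 =
      Real.cos (Real.pi / (2 * (s + 1))) * selfConv (cosWindow s) s 0 := by
  have hadd : ∀ j ∈ Finset.Icc (-s : ℤ) s, cosWindow s (1 - j) + cosWindow s (-1 - j) =
      2 * Real.cos (Real.pi / (2 * (s + 1))) * cosWindow s j := by
    intro j hj
    rw [Finset.mem_Icc] at hj
    rw [cosWindow_of_abs_le_succ (abs_le.2 ⟨by linarith, by linarith⟩),
      cosWindow_of_abs_le_succ (abs_le.2 ⟨by linarith, by linarith⟩),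
      cosWindow_of_abs_le_succ (abs_le.2 ⟨by linarith, by linarith⟩)]
    push_cast
    rw [Real.cos_add_cos, ← Real.cos_neg (Real.pi / (2 * (s + 1)) * j)]
    ring_nf
  have htwo : 2 * selfConv (cosWindow s) s 1 =
      2 * (Real.cos (Real.pi / (2 * (s + 1))) * selfConv (cosWindow s) s 0) := by
    calc 2 * selfConv (cosWindow s) s 1
        = selfConv (cosWindow s) s 1 + selfConv (cosWindow s) s (-1) := by
          rw [selfConv_neg (cosWindow_even s), two_mul]
      _ = 2 * (Real.cos (Real.pi / (2 * (s + 1))) * selfConv (cosWindow s) s 0) := by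
          rw [selfConv_zero (cosWindow_even s), ← mul_assoc, Finset.mul_sum, selfConv, selfConv,
            ← Finset.sum_add_distrib]
          exact Finset.sum_congr rfl fun j hj => by rw [← mul_add, hadd j hj]; ring
  exact mul_left_cancel₀ two_ne_zero htwo

lemma mul_selfConv_cosWindow_zero_le {r : ℕ} {k : ℤ} (hs : 0 < s) (hk : |k| ≤ (2 * r : ℕ)) :
    (1 - 6 * (r : ℝ) ^ 2 / (s : ℝ) ^ 2) * selfConv (cosWindow s) s 0 ≤
      selfConv (cosWindow s) s k := by
  have hφ := selfConv_cosWindow_zero_pos s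
  have hk' : (k : ℝ) ^ 2 ≤ 4 * (r : ℝ) ^ 2 := by
    have h : |(k : ℝ)| ≤ 2 * r := by exact_mod_cast hk
    calc (k : ℝ) ^ 2 ≤ (2 * r) ^ 2 := sq_le_sq.2 (h.trans (le_abs_self _))
      _ = 4 * (r : ℝ) ^ 2 := by ring
  have hcos : 1 - Real.cos (Real.pi / (2 * (s + 1))) ≤ 3 / 2 / (s : ℝ) ^ 2 := by
    calc 1 - Real.cos (Real.pi / (2 * (s + 1)))
        ≤ (Real.pi / (2 * (s + 1))) ^ 2 / 2 := by
          linarith [Real.one_sub_sq_div_two_le_cos (x := Real.pi / (2 * (s + 1)))]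
      _ = Real.pi ^ 2 / 8 / (s + 1 : ℝ) ^ 2 := by field_simp; ring
      _ ≤ 3 / 2 / (s : ℝ) ^ 2 :=
          div_le_div₀ (by norm_num) (by nlinarith [Real.pi_pos, Real.pi_lt_d2])
            (pow_pos (Nat.cast_pos.2 hs) 2) (by gcongr; linarith)
  have hdefect : selfConv (cosWindow s) s 0 - selfConv (cosWindow s) s k ≤
      6 * (r : ℝ) ^ 2 / (s : ℝ) ^ 2 * selfConv (cosWindow s) s 0 := by
    calc selfConv (cosWindow s) s 0 - selfConv (cosWindow s) s k
        ≤ k ^ 2 * (selfConv (cosWindow s) s 0 - selfConv (cosWindow s) s 1) :=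
          selfConv_zero_sub_selfConv_le (cosWindow_even s) (fun _ => cosWindow_eq_zero) k
      _ = k ^ 2 * (1 - Real.cos (Real.pi / (2 * (s + 1)))) * selfConv (cosWindow s) s 0 := by
          rw [selfConv_cosWindow_one]; ring
      _ ≤ 4 * (r : ℝ) ^ 2 * (3 / 2 / (s : ℝ) ^ 2) * selfConv (cosWindow s) s 0 := by
          gcongr
          exact sub_nonneg.2 (Real.cos_le_one _)
      _ = 6 * (r : ℝ) ^ 2 / (s : ℝ) ^ 2 * selfConv (cosWindow s) s 0 := by ring
  linarith

/-! ### Sum-of-squares certificates -/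

/-- `g` is a finite sum of squares of real trigonometric polynomials of degree `≤ s`. -/
def IsTrigSOS (s : ℕ) (g : (Fin n → ℝ) → ℝ) : Prop :=
  ∃ (K : ℕ) (h : Fin K → (Fin n → ℝ) → ℝ),
    (∀ k, IsTrigPoly s (h k)) ∧ ∀ x, g x = ∑ k, (h k x) ^ 2

namespace IsTrigSOS

variable {g : (Fin n → ℝ) → ℝ}

lemma of_eq_sum {ι : Type*} [Fintype ι] {h : ι → (Fin n → ℝ) → ℝ}
    (hh : ∀ i, IsTrigPoly s (h i)) (hg : ∀ x, g x = ∑ i, (h i x) ^ 2) : IsTrigSOS s g :=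
  let e := Fintype.equivFin ι
  ⟨Fintype.card ι, fun k => h (e.symm k), fun k => hh (e.symm k), fun x => by
    rw [hg, ← e.symm.sum_comp]⟩

lemma nonneg (hg : IsTrigSOS s g) (x : Fin n → ℝ) : 0 ≤ g x := by
  obtain ⟨K, h, -, hsum⟩ := hg
  exact hsum x ▸ Finset.sum_nonneg fun k _ => sq_nonneg (h k x)

lemma le_bestSOS {c : ℝ} (hc : IsTrigSOS s fun x => g x - c) : c ≤ bestSOS n s g :=
  le_csSup ⟨g 0, fun _ hc' => sub_nonneg.1 (IsTrigSOS.nonneg hc' 0)⟩ hc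

end IsTrigSOS

lemma one_sub_div_sq_pos {r : ℕ} (hs : 6 * r ^ 2 < s ^ 2) :
    0 < 1 - 6 * (r : ℝ) ^ 2 / (s : ℝ) ^ 2 := by
  have hs' : 6 * (r : ℝ) ^ 2 < (s : ℝ) ^ 2 := by exact_mod_cast hs
  rw [sub_pos, div_lt_one (hs'.trans_le' (by positivity))]
  exact hs'

namespace IsTrigPoly

variable {g : (Fin n → ℝ) → ℝ}

/-- The deconvolution stays above `m - ‖g - ḡ‖_F (δ⁻ⁿ - 1)`, and `g` is recovered from its grid
values by a quadrature against the squares `prodKernel a s (x - y) ^ 2`. -/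
lemma isTrigSOS_sub_of_kernel (hg : IsTrigPoly d g) {a : ℤ → ℝ} (ha : a.Even)
    (hsupp : ∀ j : ℤ, s < |j| → a j = 0) (hφ : 0 < selfConv a s 0) {δ : ℝ} (hδ : 0 < δ)
    (hlow : ∀ k : ℤ, |k| ≤ d → δ * selfConv a s 0 ≤ selfConv a s k) {m : ℝ}
    (hm : ∀ x ∈ Set.Icc (0 : Fin n → ℝ) 1, m ≤ g x) :
    IsTrigSOS s fun x => g x - (m - centeredFnorm g * ((δ ^ n)⁻¹ - 1)) := by
  obtain ⟨N, hN⟩ := exists_gt (2 * s + d)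
  have hNpos : 0 < N := by omega
  have : NeZero N := ⟨hNpos.ne'⟩
  have hlow' : ∀ k ∈ freqBox n d, ∀ i, δ * selfConv a s 0 ≤ selfConv a s (k i) :=
    fun k hk i => hlow _ (mem_freqBox.1 hk i)
  have hmul : ∀ k ∈ freqBox n d, multiplier a s k ≠ 0 := fun k hk =>
    ((pow_pos hδ n).trans_le (pow_le_multiplier hδ.le hφ (hlow' k hk))).ne'
  set D : ℝ := (N * selfConv a s 0) ^ n with hD
  set c : ℝ := m - centeredFnorm g * ((δ ^ n)⁻¹ - 1)
  have hDpos : 0 < D := pow_pos (mul_pos (Nat.cast_pos.2 hNpos) hφ) n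
  have hweight (y : Fin n → ZMod N) : 0 ≤ (deconvolution a s d g (torusGrid y) - c) / D := by
    have hdec := abs_deconvolution_sub_le hg hφ.ne'
      (fun k hk => abs_inv_multiplier_sub_one_le ha hsupp hδ hφ (hlow' k hk)) (torusGrid y)
    have hgrid := hm _ (torusGrid_mem_Icc y)
    exact div_nonneg (by linarith [(abs_le.1 hdec).1]) hDpos.le
  refine IsTrigSOS.of_eq_sum (fun y : Fin n → ZMod N => isTrigPoly_mul_prodKernel_sub ha s
    (√((deconvolution a s d g (torusGrid y) - c) / D)) (torusGrid y)) fun x => ?_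
  have hquad := sum_deconvolution_mul_prodKernel_sq ha hsupp hφ.ne' hN hg hmul x
  have hmass := sum_prodKernel_sq ha hsupp hφ.ne' (by omega : 2 * s < N) x
  rw [← hD] at hquad hmass
  simp only [mul_pow, Real.sq_sqrt (hweight _), div_mul_eq_mul_div, ← Finset.sum_div, sub_mul,
    Finset.sum_sub_distrib, ← Finset.mul_sum, hquad, hmass]
  field_simp

lemma sub_le_bestSOS {r : ℕ} (hg : IsTrigPoly (2 * r) g) (hs : 6 * r ^ 2 < s ^ 2) {m : ℝ}
    (hm : ∀ x ∈ Set.Icc (0 : Fin n → ℝ) 1, m ≤ g x) :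
    m - centeredFnorm g * ((1 - 6 * (r : ℝ) ^ 2 / (s : ℝ) ^ 2) ^ (-(n : ℤ)) - 1) ≤
      bestSOS n s g := by
  have hspos : 0 < s := Nat.pos_of_ne_zero fun h => by simp [h] at hs
  rw [zpow_neg, zpow_natCast]
  exact (hg.isTrigSOS_sub_of_kernel (cosWindow_even s) (fun _ => cosWindow_eq_zero)
    (selfConv_cosWindow_zero_pos s) (one_sub_div_sq_pos hs)
    (fun _ => mul_selfConv_cosWindow_zero_le hspos) hm).le_bestSOS

end IsTrigPoly

lemma zpow_neg_sub_one_le {δ : ℝ} (hpos : 0 < δ) (n : ℕ) :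
    δ ^ (-(n : ℤ)) - 1 ≤ n * (1 - δ) * (δ⁻¹) ^ n := by
  have hbern : 1 + n * (δ - 1) ≤ δ ^ n := by
    simpa using one_add_mul_le_pow (by linarith : (-2 : ℝ) ≤ δ - 1) n
  have hδn : 0 < δ ^ n := pow_pos hpos n
  rw [zpow_neg, zpow_natCast, inv_pow, ← div_eq_mul_inv, le_div_iff₀ hδn, sub_mul,
    inv_mul_cancel₀ hδn.ne']
  linarith

lemma zpow_neg_one_sub_div_sq_sub_one_nonneg {r : ℕ} (hs : 6 * r ^ 2 < s ^ 2) (n : ℕ) :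
    0 ≤ (1 - 6 * (r : ℝ) ^ 2 / (s : ℝ) ^ 2) ^ (-(n : ℤ)) - 1 := by
  have hδ := one_sub_div_sq_pos hs
  rw [zpow_neg, zpow_natCast, sub_nonneg]
  exact (one_le_inv₀ (pow_pos hδ n)).2
    (pow_le_one₀ hδ.le (sub_le_self _ (by positivity)))

lemma zpow_neg_one_sub_div_sq_sub_one_le {r : ℕ} (hs : 6 * r ^ 2 < s ^ 2) (n : ℕ) :
    (1 - 6 * (r : ℝ) ^ 2 / (s : ℝ) ^ 2) ^ (-(n : ℤ)) - 1 ≤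
      n * (6 * (r : ℝ) ^ 2) * (6 * (r : ℝ) ^ 2 + 1) ^ n / (s : ℝ) ^ 2 := by
  have hs' : 6 * (r : ℝ) ^ 2 + 1 ≤ (s : ℝ) ^ 2 := by exact_mod_cast hs
  have hspos : 0 < (s : ℝ) ^ 2 := by linarith [sq_nonneg (r : ℝ)]
  have hδ := one_sub_div_sq_pos hs
  have hinv : (1 - 6 * (r : ℝ) ^ 2 / (s : ℝ) ^ 2)⁻¹ ≤ 6 * (r : ℝ) ^ 2 + 1 := by
    rw [inv_le_comm₀ hδ (by positivity), one_sub_div hspos.ne', inv_eq_one_div,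
      div_le_div_iff₀ (by positivity) hspos]
    nlinarith [sq_nonneg (r : ℝ)]
  calc (1 - 6 * (r : ℝ) ^ 2 / (s : ℝ) ^ 2) ^ (-(n : ℤ)) - 1
      ≤ n * (6 * (r : ℝ) ^ 2 / (s : ℝ) ^ 2) *
          ((1 - 6 * (r : ℝ) ^ 2 / (s : ℝ) ^ 2)⁻¹) ^ n := by
        simpa using zpow_neg_sub_one_le hδ n
    _ ≤ n * (6 * (r : ℝ) ^ 2 / (s : ℝ) ^ 2) * (6 * (r : ℝ) ^ 2 + 1) ^ n := by gcongr
    _ = n * (6 * (r : ℝ) ^ 2) * (6 * (r : ℝ) ^ 2 + 1) ^ n / (s : ℝ) ^ 2 := by ring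

/-! ### Lipschitz families and their step lower bounds -/

/-- The index, counted from `0`, of the cell of the grid `gridPt a b sp` that contains `ω`; the
truncation puts `b` into the last cell. -/
noncomputable def cellIndex (a b : ℝ) (sp : ℕ) (ω : ℝ) : ℕ :=
  min ⌊(ω - a) * sp / (b - a)⌋₊ (sp - 1)

section Grid

variable {a b ω : ℝ} {sp : ℕ}

lemma cellIndex_lt (hsp : 1 ≤ sp) (a b ω : ℝ) : cellIndex a b sp ω < sp :=
  (min_le_right _ _).trans_lt (Nat.sub_lt hsp one_pos)

lemma measurable_cellIndex (a b : ℝ) (sp : ℕ) : Measurable (cellIndex a b sp) := by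
  unfold cellIndex
  fun_prop

lemma gridPt_mem_Icc (hab : a ≤ b) {i : ℕ} (hi : i ≤ sp) : gridPt a b sp i ∈ Set.Icc a b := by
  have hba : 0 ≤ b - a := sub_nonneg.2 hab
  have hle : i * (b - a) / sp ≤ b - a :=
    div_le_of_le_mul₀ (Nat.cast_nonneg sp) hba <| by
      rw [mul_comm]
      exact mul_le_mul_of_nonneg_left (Nat.cast_le.2 hi) hba
  have hnonneg : 0 ≤ i * (b - a) / sp := by positivity
  exact ⟨by rw [gridPt]; linarith, by rw [gridPt]; linarith⟩

lemma abs_sub_gridPt_cellIndex_le (hab : a < b) (hsp : 1 ≤ sp) (hω : ω ∈ Set.Icc a b) :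
    |ω - gridPt a b sp (cellIndex a b sp ω)| ≤ (b - a) / sp := by
  have hba : 0 < b - a := sub_pos.2 hab
  have hsp' : (0 : ℝ) < sp := Nat.cast_pos.2 hsp
  set t : ℝ := (ω - a) * sp / (b - a) with ht
  have hlow : (cellIndex a b sp ω : ℝ) ≤ t :=
    (Nat.cast_le.2 (min_le_left _ _)).trans <|
      Nat.floor_le (div_nonneg (mul_nonneg (sub_nonneg.2 hω.1) hsp'.le) hba.le)
  have hup : t ≤ cellIndex a b sp ω + 1 := by
    rw [cellIndex, ← ht]
    rcases min_choice ⌊t⌋₊ (sp - 1) with h | h <;> rw [h]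
    · exact (Nat.lt_floor_add_one t).le
    · rw [Nat.cast_pred hsp, sub_add_cancel, ht, div_le_iff₀ hba, mul_comm]
      exact mul_le_mul_of_nonneg_left (by linarith [hω.2]) hsp'.le
  have hdiff : ω - gridPt a b sp (cellIndex a b sp ω) =
      (t - cellIndex a b sp ω) * ((b - a) / sp) := by
    rw [gridPt, ht]
    field_simp
    ring
  rw [hdiff, abs_of_nonneg (mul_nonneg (sub_nonneg.2 hlow) (div_pos hba hsp').le)]
  exact mul_le_of_le_one_left (div_pos hba hsp').le (by linarith)

end Grid

section Lipschitz

variable {f : (Fin n → ℝ) → ℝ → ℝ} {T : Set ℝ} {K : ℝ≥0} {a b ω : ℝ} {r sp : ℕ}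

lemma cstar_le (hbdd : BddBelow ((fun x => f x ω) '' Set.Icc (0 : Fin n → ℝ) 1))
    {x : Fin n → ℝ} (hx : x ∈ Set.Icc (0 : Fin n → ℝ) 1) : cstar n f ω ≤ f x ω :=
  csInf_le hbdd (Set.mem_image_of_mem _ hx)

lemma lipschitzOnWith_cstar
    (hbdd : ∀ ω ∈ T, BddBelow ((fun x => f x ω) '' Set.Icc (0 : Fin n → ℝ) 1))
    (hlip : ∀ x ∈ Set.Icc (0 : Fin n → ℝ) 1, LipschitzOnWith K (f x) T) :
    LipschitzOnWith K (cstar n f) T := by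
  refine LipschitzOnWith.of_le_add_mul K fun ω hω ω' hω' => sub_le_iff_le_add.1 ?_
  refine le_csInf ((Set.nonempty_Icc.2 zero_le_one).image _)
    (Set.forall_mem_image.2 fun x hx => sub_le_iff_le_add.2 ?_)
  exact (cstar_le (hbdd ω hω) hx).trans ((hlip x hx).le_add_mul hω hω')

lemma measurable_stepSOS (n s : ℕ) (f : (Fin n → ℝ) → ℝ → ℝ) (a b : ℝ) (sp : ℕ) :
    Measurable (stepSOS n s f a b sp) :=
  (measurable_from_nat (f := fun i => bestSOS n s fun x => f x (gridPt a b sp i))).comp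
    (measurable_cellIndex a b sp)

lemma intervalIntegrable_stepSOS (n s : ℕ) (f : (Fin n → ℝ) → ℝ → ℝ) (a b : ℝ)
    (hsp : 1 ≤ sp) (u v : ℝ) : IntervalIntegrable (stepSOS n s f a b sp) volume u v := by
  have hbound (ω : ℝ) : ‖stepSOS n s f a b sp ω‖ ≤
      ∑ i ∈ Finset.range sp, ‖bestSOS n s fun x => f x (gridPt a b sp i)‖ :=
    Finset.single_le_sum (f := fun i => ‖bestSOS n s fun x => f x (gridPt a b sp i)‖)
      (fun _ _ => norm_nonneg _) (Finset.mem_range.2 (cellIndex_lt hsp a b ω))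
  exact (intervalIntegrable_const (c := ∑ i ∈ Finset.range sp,
    ‖bestSOS n s fun x => f x (gridPt a b sp i)‖)).mono_fun
    (measurable_stepSOS n s f a b sp).aestronglyMeasurable
    (ae_of_all _ fun ω => (hbound ω).trans (le_abs_self _))

lemma cstar_sub_stepSOS_le (hab : a < b)
    (hf : ∀ ω ∈ Set.Icc a b, IsTrigPoly (2 * r) fun x => f x ω)
    (hlip : ∀ x ∈ Set.Icc (0 : Fin n → ℝ) 1, LipschitzOnWith K (f x) (Set.Icc a b))
    (hs : 6 * r ^ 2 < s ^ 2) (hsp : 1 ≤ sp) (hω : ω ∈ Set.Icc a b) :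
    cstar n f ω - stepSOS n s f a b sp ω ≤
      (⨆ i : Fin sp, centeredFnorm fun x => f x (gridPt a b sp i)) *
        ((1 - 6 * (r : ℝ) ^ 2 / (s : ℝ) ^ 2) ^ (-(n : ℤ)) - 1) + K * ((b - a) / sp) := by
  let i : Fin sp := ⟨cellIndex a b sp ω, cellIndex_lt hsp a b ω⟩
  have hi : gridPt a b sp i ∈ Set.Icc a b := gridPt_mem_Icc hab.le i.2.le
  have hbdd : ∀ ω ∈ Set.Icc a b, BddBelow ((fun x => f x ω) '' Set.Icc (0 : Fin n → ℝ) 1) :=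
    fun ω hω => (hf ω hω).bddBelow_image _
  have hcell : cstar n f ω ≤ cstar n f (gridPt a b sp i) + K * ((b - a) / sp) :=
    ((lipschitzOnWith_cstar hbdd hlip).le_add_mul hω hi).trans <| by
      gcongr
      exact abs_sub_gridPt_cellIndex_le hab hsp hω
  have hsos := (hf _ hi).sub_le_bestSOS hs fun x hx => cstar_le (hbdd _ hi) hx
  have hsup : centeredFnorm (fun x => f x (gridPt a b sp i)) ≤
      ⨆ i : Fin sp, centeredFnorm fun x => f x (gridPt a b sp i) :=
    le_ciSup (f := fun i : Fin sp => centeredFnorm fun x => f x (gridPt a b sp i))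
      (Set.finite_range _).bddAbove i
  have hfactor := mul_le_mul_of_nonneg_right hsup (zpow_neg_one_sub_div_sq_sub_one_nonneg hs n)
  have hstep : stepSOS n s f a b sp ω = bestSOS n s fun x => f x (gridPt a b sp i) := rfl
  linarith

lemma integral_cstar_sub_stepSOS_le (hab : a < b)
    (hf : ∀ ω ∈ Set.Icc a b, IsTrigPoly (2 * r) fun x => f x ω)
    (hlip : ∀ x ∈ Set.Icc (0 : Fin n → ℝ) 1, LipschitzOnWith K (f x) (Set.Icc a b))
    (hs : 6 * r ^ 2 < s ^ 2) (hsp : 1 ≤ sp) :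
    ∫ ω in a..b, (cstar n f ω - stepSOS n s f a b sp ω) ≤
      (⨆ i : Fin sp, centeredFnorm fun x => f x (gridPt a b sp i)) *
        ((1 - 6 * (r : ℝ) ^ 2 / (s : ℝ) ^ 2) ^ (-(n : ℤ)) - 1) * (b - a) +
        K * (b - a) ^ 2 / sp := by
  have hcstar : IntervalIntegrable (cstar n f) volume a b :=
    (lipschitzOnWith_cstar (fun ω hω => (hf ω hω).bddBelow_image _)
      hlip).continuousOn.intervalIntegrable_of_Icc hab.le
  refine (intervalIntegral.integral_mono_on hab.le
    (hcstar.sub (intervalIntegrable_stepSOS n s f a b hsp a b)) intervalIntegrable_const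
    fun ω hω => cstar_sub_stepSOS_le hab hf hlip hs hsp hω).trans_eq ?_
  rw [intervalIntegral.integral_const, smul_eq_mul]
  ring

lemma centeredFnorm_le_of_lipschitzOnWith
    (hf : ∀ ω ∈ Set.Icc a b, IsTrigPoly d fun x => f x ω)
    (hlip : ∀ x ∈ Set.Icc (0 : Fin n → ℝ) 1, LipschitzOnWith K (f x) (Set.Icc a b))
    (hω : ω ∈ Set.Icc a b) :
    centeredFnorm (fun x => f x ω) ≤
      (2 * d + 1) ^ n * (Fnorm (fun x => f x a) + K * (b - a)) := by
  have ha : a ∈ Set.Icc a b := ⟨le_rfl, hω.1.trans hω.2⟩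
  refine (hf ω hω).centeredFnorm_le fun x hx => ?_
  have hnear := (hlip x hx).norm_sub_le hω ha
  have hnorm := (hf a ha).abs_le_Fnorm x
  calc |f x ω| ≤ |f x a| + ‖f x ω - f x a‖ := by
        rw [Real.norm_eq_abs]
        linarith [abs_sub_abs_le_abs_sub (f x ω) (f x a)]
    _ ≤ Fnorm (fun x => f x a) + K * (b - a) := by
        refine add_le_add hnorm (hnear.trans ?_)
        rw [Real.norm_of_nonneg (sub_nonneg.2 hω.1)]
        gcongr
        exact hω.2

lemma integral_cstar_sub_stepSOS_le_div_sq (hab : a < b)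
    (hf : ∀ ω ∈ Set.Icc a b, IsTrigPoly (2 * r) fun x => f x ω)
    (hlip : ∀ x ∈ Set.Icc (0 : Fin n → ℝ) 1, LipschitzOnWith K (f x) (Set.Icc a b)) {B : ℝ}
    (hB : ∀ ω ∈ Set.Icc a b, centeredFnorm (fun x => f x ω) ≤ B) (hs : 6 * r ^ 2 < s ^ 2)
    (hssp : s ^ 2 ≤ sp) :
    ∫ ω in a..b, (cstar n f ω - stepSOS n s f a b sp ω) ≤
      (B * (n * (6 * (r : ℝ) ^ 2) * (6 * (r : ℝ) ^ 2 + 1) ^ n) * (b - a) +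
        K * (b - a) ^ 2) / (s : ℝ) ^ 2 := by
  have hs₀ : 0 < s ^ 2 := by omega
  have hspow : (0 : ℝ) < (s : ℝ) ^ 2 := by exact_mod_cast hs₀
  have hsp : (s : ℝ) ^ 2 ≤ sp := by exact_mod_cast hssp
  have : 0 < b - a := sub_pos.2 hab
  have hBnonneg : 0 ≤ B := (centeredFnorm_nonneg _).trans (hB a ⟨le_rfl, hab.le⟩)
  have hsup : (⨆ i : Fin sp, centeredFnorm fun x => f x (gridPt a b sp i)) ≤ B :=
    Real.iSup_le (fun i => hB _ (gridPt_mem_Icc hab.le i.2.le)) hBnonneg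
  calc ∫ ω in a..b, (cstar n f ω - stepSOS n s f a b sp ω)
      ≤ (⨆ i : Fin sp, centeredFnorm fun x => f x (gridPt a b sp i)) *
          ((1 - 6 * (r : ℝ) ^ 2 / (s : ℝ) ^ 2) ^ (-(n : ℤ)) - 1) * (b - a) +
          K * (b - a) ^ 2 / sp :=
        integral_cstar_sub_stepSOS_le hab hf hlip hs (hs₀.trans_le hssp)
    _ ≤ B * (n * (6 * (r : ℝ) ^ 2) * (6 * (r : ℝ) ^ 2 + 1) ^ n / (s : ℝ) ^ 2) * (b - a) +
          K * (b - a) ^ 2 / (s : ℝ) ^ 2 := by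
        gcongr
        · exact zpow_neg_one_sub_div_sq_sub_one_nonneg hs n
        · exact zpow_neg_one_sub_div_sq_sub_one_le hs n
    _ = (B * (n * (6 * (r : ℝ) ^ 2) * (6 * (r : ℝ) ^ 2 + 1) ^ n) * (b - a) +
          K * (b - a) ^ 2) / (s : ℝ) ^ 2 := by ring

end Lipschitz

theorem piecewise_constant_sos_convergence_general (n r : ℕ) (a b : ℝ) (hab : a < b)
    (f : (Fin n → ℝ) → ℝ → ℝ)
    (hf : ∀ ω ∈ Set.Icc a b, IsTrigPoly (2 * r) fun x => f x ω) {K : ℝ≥0}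
    (hlip : ∀ x ∈ Set.Icc (0 : Fin n → ℝ) 1, LipschitzOnWith K (f x) (Set.Icc a b)) :
    ∃ C : ℝ, 0 < C ∧
      (∀ s sp : ℕ, 6 * r ^ 2 < s ^ 2 → 1 ≤ sp →
        ∫ ω in a..b, (cstar n f ω - stepSOS n s f a b sp ω) ≤
          (⨆ i : Fin sp, Fnorm (fun x => f x (gridPt a b sp i) -
              ∫ y in Set.Icc (0 : Fin n → ℝ) 1, f y (gridPt a b sp i))) *
            ((1 - 6 * (r : ℝ) ^ 2 / (s : ℝ) ^ 2) ^ (-(n : ℤ)) - 1) * (b - a) + C / sp) ∧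
      ∃ C' : ℝ, 0 < C' ∧
        ∀ s sp : ℕ, 6 * r ^ 2 < s ^ 2 → s ^ 2 ≤ sp →
          ∫ ω in a..b, (cstar n f ω - stepSOS n s f a b sp ω) ≤ C' / s ^ 2 := by
  refine ⟨K * (b - a) ^ 2 + 1, by positivity, fun s sp hs hsp => ?_, ?_⟩
  · exact (integral_cstar_sub_stepSOS_le hab hf hlip hs hsp).trans <| add_le_add le_rfl <|
      div_le_div_of_nonneg_right (lt_add_one _).le (Nat.cast_nonneg sp)
  · obtain ⟨B, hB⟩ : ∃ B : ℝ, ∀ ω ∈ Set.Icc a b, centeredFnorm (fun x => f x ω) ≤ B :=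
      ⟨_, fun ω hω => centeredFnorm_le_of_lipschitzOnWith hf hlip hω⟩
    have hBnonneg : 0 ≤ B := (centeredFnorm_nonneg _).trans (hB a ⟨le_rfl, hab.le⟩)
    have : 0 < b - a := sub_pos.2 hab
    refine ⟨B * (n * (6 * (r : ℝ) ^ 2) * (6 * (r : ℝ) ^ 2 + 1) ^ n) * (b - a) +
      K * (b - a) ^ 2 + 1, by positivity, fun s sp hs hssp => ?_⟩
    exact (integral_cstar_sub_stepSOS_le_div_sq hab hf hlip hB hs hssp).trans <|
      div_le_div_of_nonneg_right (lt_add_one _).le (sq_nonneg _)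

/-! ### Polynomial coefficients -/

lemma exists_lipschitzOnWith_polynomial_eval (p : Polynomial ℂ) (a b : ℝ) :
    ∃ K : ℝ≥0, LipschitzOnWith K (fun ω : ℝ => p.eval (ω : ℂ)) (Set.Icc a b) := by
  have hp : ContDiff ℝ 1 fun z : ℂ => p.eval z := by
    simpa using (p.contDiff_aeval (R := ℂ) (𝕜 := ℂ) 1).restrict_scalars ℝ
  exact (hp.comp Complex.ofRealCLM.contDiff).contDiffOn.exists_lipschitzOnWith one_ne_zero
    (convex_Icc a b) isCompact_Icc

lemma exists_lipschitzOnWith_of_eq_sum_polynomial {X κ : Type*} {f : X → ℝ → ℝ} {S : Finset κ}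
    {c : κ → Polynomial ℂ} {χ : κ → X → ℂ} (hχ : ∀ k x, ‖χ k x‖ ≤ 1)
    (hf : ∀ x (ω : ℝ), (f x ω : ℂ) = ∑ k ∈ S, (c k).eval (ω : ℂ) * χ k x) (a b : ℝ) :
    ∃ K : ℝ≥0, ∀ x, LipschitzOnWith K (f x) (Set.Icc a b) := by
  choose K hK using fun k => exists_lipschitzOnWith_polynomial_eval (c k) a b
  refine ⟨∑ k ∈ S, K k, fun x => LipschitzOnWith.of_dist_le_mul fun ω hω ω' hω' => ?_⟩
  rw [← Complex.isometry_ofReal.dist_eq, dist_eq_norm, hf, hf, ← Finset.sum_sub_distrib,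
    NNReal.coe_sum, Finset.sum_mul]
  refine norm_sum_le_of_le _ fun k _ => ?_
  rw [← sub_mul, norm_mul, ← dist_eq_norm]
  exact (mul_le_of_le_one_right dist_nonneg (hχ k x)).trans ((hK k).dist_le_mul ω hω ω' hω')

/-- `O(1/s²)` convergence via a piecewise-constant lower bound. Let
`f(x, ω)` be, for each `ω ∈ [a, b]`, a real trigonometric polynomial of degree `≤ 2r` in `x`
whose Fourier coefficients are polynomial in `ω`. With `c*(ω) = inf_{x ∈ [0,1]ⁿ} f(x, ω)`
and the step function `c*_s` built from the best degree-`s` SOS bounds at `s_p` equidistant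
grid points `ω_i`, there is `C > 0` with
`∫_a^b (c* − c*_s) ≤ max_i ‖f(·, ω_i) − f̄(·, ω_i)‖_F · [(1 − 6r²/s²)^{−n} − 1]·(b − a)
+ C/s_p` whenever `s² > 6r²`; in particular, for `s_p ≥ s²` one gets `∫_a^b (c* − c*_s) ≤
C′/s²` for some `C′ > 0`. -/
theorem piecewise_constant_sos_convergence (n r : ℕ) (a b : ℝ) (hab : a < b)
    (f : (Fin n → ℝ) → ℝ → ℝ)
    (hf : ∃ (S : Finset (Fin n → ℤ)) (c : (Fin n → ℤ) → Polynomial ℂ),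
      (∀ k ∈ S, ∀ i, |k i| ≤ (2 * r : ℤ)) ∧
      ∀ (x : Fin n → ℝ) (ω : ℝ),
        (f x ω : ℂ) = ∑ k ∈ S, Polynomial.eval (ω : ℂ) (c k) * trigChar k x) :
    ∃ C : ℝ, 0 < C ∧
      (∀ s sp : ℕ, 6 * r ^ 2 < s ^ 2 → 1 ≤ sp →
        ∫ ω in a..b, (cstar n f ω - stepSOS n s f a b sp ω) ≤
          (⨆ i : Fin sp, Fnorm (fun x => f x (gridPt a b sp i) -
              ∫ y in Set.Icc (0 : Fin n → ℝ) 1, f y (gridPt a b sp i))) *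
            ((1 - 6 * (r : ℝ) ^ 2 / (s : ℝ) ^ 2) ^ (-(n : ℤ)) - 1) * (b - a) + C / sp) ∧
      ∃ C' : ℝ, 0 < C' ∧
        ∀ s sp : ℕ, 6 * r ^ 2 < s ^ 2 → s ^ 2 ≤ sp →
          ∫ ω in a..b, (cstar n f ω - stepSOS n s f a b sp ω) ≤ C' / s ^ 2 := by
  obtain ⟨S, c, hS, hsum⟩ := hf
  obtain ⟨K, hK⟩ :=
    exists_lipschitzOnWith_of_eq_sum_polynomial (fun k x => (norm_trigChar k x).le) hsum a b
  exact piecewise_constant_sos_convergence_general n r a b hab f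
    (fun ω _ => ⟨S, fun k => (c k).eval (ω : ℂ), by exact_mod_cast hS, fun x => hsum x ω⟩)
    fun x _ => hK x
end
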